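/- arXiv:1312.0101 — 3 statements merged into one kernel-verified Lean document; each statement's English description precedes it below -/
import Mathlib

section
/- Let ω and φ be as in the context. Then c φ(0) ≤ −φ(1) ≤ C φ(0) for constants c, C > 0 depending only on n, and for every δ ∈ (0, 1/2) there is a constant c_δ > 0 (depending only on n and δ) such that −φ'(x) ≥ c_δ φ(0) for all x with δ ≤ x ≤ 1 − δ. -/
open MeasureTheory Set Filter Topology RealInnerProductSpace

noncomputable section

/-- The point `(x, y) ∈ ℝ × ℝ^m ≅ ℝ^{m+1}`. -/
def mkPt (m : ℕ) (x : ℝ) (y : EuclideanSpace ℝ (Fin m)) : EuclideanSpace ℝ (Fin (m+1)) :=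
  (EuclideanSpace.equiv (Fin (m+1)) ℝ).symm (Fin.cons x ((EuclideanSpace.equiv (Fin m) ℝ) y))

/-- The cross-section `Ω(s) = {y : (s, y) ∈ Ω}`. -/
def cross {m : ℕ} (Ω : Set (EuclideanSpace ℝ (Fin (m+1)))) (s : ℝ) :
    Set (EuclideanSpace ℝ (Fin m)) := {y | mkPt m s y ∈ Ω}

/-- `ω(s)`: the (n-1)-dimensional volume of the cross-section `Ω(s)`. -/
def ωvol {m : ℕ} (Ω : Set (EuclideanSpace ℝ (Fin (m+1)))) (s : ℝ) : ℝ :=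
  (volume (cross Ω s)).toReal

/-- The Laplacian, as the sum of the pure second derivatives along the standard basis. -/
def lap {k : ℕ} (u : EuclideanSpace ℝ (Fin k) → ℝ) (p : EuclideanSpace ℝ (Fin k)) : ℝ :=
  ∑ i, fderiv ℝ (fun q => fderiv ℝ u q (EuclideanSpace.single i 1)) p (EuclideanSpace.single i 1)

/-- The cross-sectional average `ū(x)` of `u`. -/
def ubarFn {m : ℕ} (Ω : Set (EuclideanSpace ℝ (Fin (m+1))))
    (u : EuclideanSpace ℝ (Fin (m+1)) → ℝ) (x : ℝ) : ℝ :=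
  (∫ y in cross Ω x, u (mkPt m x y)) / ωvol Ω x

/-- `(φ, φd)` is a (nonzero, C¹ on [0,1]) solution of the Neumann problem
`-(ω φ')' = μ ω φ` on (0,1), with `φ'(0) = φ'(1) = 0`. -/
def NeumannSol (ω : ℝ → ℝ) (μ : ℝ) (φ φd : ℝ → ℝ) : Prop :=
  (∀ x ∈ Icc (0:ℝ) 1, HasDerivWithinAt φ (φd x) (Icc 0 1) x) ∧
  ContinuousOn φd (Icc 0 1) ∧ φd 0 = 0 ∧ φd 1 = 0 ∧
  (∃ x ∈ Icc (0:ℝ) 1, φ x ≠ 0) ∧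
  ∀ x ∈ Ioo (0:ℝ) 1, HasDerivAt (fun t => ω t * φd t) (-(μ * ω x * φ x)) x

/-- `μ` is a Neumann eigenvalue of `-(ω φ')' = μ ω φ`. -/
def IsNeumannEigenvalue (ω : ℝ → ℝ) (μ : ℝ) : Prop := ∃ φ φd, NeumannSol ω μ φ φd


/-- Weight conditions. -/
structure Wt (m : ℕ) (w : ℝ → ℝ) : Prop where
  pos : ∀ x ∈ Ioo (0:ℝ) 1, 0 < w x
  A : ∀ s t, 0 < s → s ≤ t → t < 1 → w s * (1 - t) ^ m ≤ w t * (1 - s) ^ m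
  B : ∀ s t, 0 < s → s ≤ t → t < 1 → w t * s ^ m ≤ w s * t ^ m

lemma Wt.refl' {m : ℕ} {w : ℝ → ℝ} (h : Wt m w) : Wt m (fun x => w (1 - x)) where
  pos x hx := h.pos _ ⟨by linarith [hx.2], by linarith [hx.1]⟩
  A s t hs hst ht := by
    have := h.B (1 - t) (1 - s) (by linarith) (by linarith) (by linarith)
    simpa using this
  B s t hs hst ht := by
    have := h.A (1 - t) (1 - s) (by linarith) (by linarith) (by linarith)
    simpa using this

lemma Wt.cont {m : ℕ} {w : ℝ → ℝ} (h : Wt m w) : ContinuousOn w (Ioo 0 1) := by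
  intro x hx
  apply ContinuousAt.continuousWithinAt
  have hx0 := hx.1
  have hx1 : 0 < 1 - x := by linarith [hx.2]
  let f : ℝ → ℝ := fun t => w x * (t / x) ^ m
  let g : ℝ → ℝ := fun t => w x * ((1 - t) / (1 - x)) ^ m
  have hf : Tendsto f (𝓝 x) (𝓝 (w x)) := by
    have : ContinuousAt f x := by fun_prop
    have h2 : f x = w x := by simp [f, hx0.ne']
    rw [← h2]; exact this
  have hg : Tendsto g (𝓝 x) (𝓝 (w x)) := by
    have : ContinuousAt g x := by fun_prop
    have h2 : g x = w x := by simp [g, hx1.ne']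
    rw [← h2]; exact this
  have h1 := hf.min hg
  have h2 := hf.max hg
  rw [min_self] at h1
  rw [max_self] at h2
  have hm : ∀ᶠ t in 𝓝 x, t ∈ Ioo (0:ℝ) 1 := isOpen_Ioo.mem_nhds hx
  have key : ∀ t ∈ Ioo (0:ℝ) 1, (t ≤ x → f t ≤ w t ∧ w t ≤ g t) ∧ (x ≤ t → g t ≤ w t ∧ w t ≤ f t) := by
    intro t ht
    have e1 : f t = w x * t ^ m / x ^ m := by simp only [f, div_pow]; ring
    have e2 : g t = w x * (1 - t) ^ m / (1 - x) ^ m := by simp only [g, div_pow]; ring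
    have p1 : 0 < x ^ m := by positivity
    have p2 : 0 < (1 - x) ^ m := by positivity
    rw [e1, e2, div_le_iff₀ p1, div_le_iff₀ p2, le_div_iff₀ p1, le_div_iff₀ p2]
    refine ⟨fun htx => ⟨h.B t x ht.1 htx hx.2, h.A t x ht.1 htx hx.2⟩,
      fun hxt => ⟨h.A x t hx.1 hxt ht.2, h.B x t hx.1 hxt ht.2⟩⟩
  refine tendsto_of_tendsto_of_tendsto_of_le_of_le' h1 h2 ?_ ?_
  · filter_upwards [hm] with t ht
    rcases le_total t x with h' | h'
    · exact (min_le_left _ _).trans ((key t ht).1 h').1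
    · exact (min_le_right _ _).trans ((key t ht).2 h').1
  · filter_upwards [hm] with t ht
    rcases le_total t x with h' | h'
    · exact ((key t ht).1 h').2.trans (le_max_right _ _)
    · exact ((key t ht).2 h').2.trans (le_max_left _ _)

lemma mkPt_comb (m : ℕ) (a b x x' : ℝ) (y y' : EuclideanSpace ℝ (Fin m)) :
    a • mkPt m x y + b • mkPt m x' y' = mkPt m (a * x + b * x') (a • y + b • y') := by
  ext i
  refine Fin.cases ?_ (fun j => ?_) i <;> simp [mkPt]

lemma mkPt_cont (m : ℕ) (s : ℝ) : Continuous (fun y => mkPt m s y) := by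
  unfold mkPt
  refine (EuclideanSpace.equiv (Fin (m+1)) ℝ).symm.continuous.comp ?_
  refine continuous_pi fun i => ?_
  refine Fin.cases ?_ (fun j => ?_) i
  · simpa using continuous_const
  · simp only [Fin.cons_succ]
    exact (continuous_apply j).comp (EuclideanSpace.equiv (Fin m) ℝ).continuous

lemma cross_fin {m : ℕ} {Ω : Set (EuclideanSpace ℝ (Fin (m+1)))} (hb : Bornology.IsBounded Ω) (s : ℝ) :
    volume (cross Ω s) < ⊤ := by
  apply Bornology.IsBounded.measure_lt_top
  obtain ⟨R, hR⟩ := hb.exists_norm_le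
  refine isBounded_iff_forall_norm_le.2 ⟨R, fun y hy => ?_⟩
  refine le_trans ?_ (hR _ hy)
  rw [EuclideanSpace.norm_eq, EuclideanSpace.norm_eq]
  apply Real.sqrt_le_sqrt
  rw [Fin.sum_univ_succ]
  have : ∀ j : Fin m, (mkPt m s y) j.succ = y j := fun j => by simp [mkPt]
  simp only [this]
  have : 0 ≤ ‖(mkPt m s y) 0‖ ^ 2 := by positivity
  linarith

lemma ω_comb {m : ℕ} {Ω : Set (EuclideanSpace ℝ (Fin (m+1)))} (hc : Convex ℝ Ω)
    (hb : Bornology.IsBounded Ω) {s r : ℝ} (hr : (cross Ω r).Nonempty) {a : ℝ} (ha : 0 ≤ a) (ha1 : a ≤ 1) :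
    a ^ m * ωvol Ω s ≤ ωvol Ω (a * s + (1 - a) * r) := by
  obtain ⟨y0, hy0⟩ := hr
  have hsub : AffineMap.homothety y0 a '' (cross Ω s) ⊆ cross Ω (a * s + (1 - a) * r) := by
    rintro _ ⟨y, hy, rfl⟩
    have h := hc hy hy0 ha (by linarith : 0 ≤ 1 - a) (by ring)
    rw [mkPt_comb] at h
    have e : AffineMap.homothety y0 a y = a • y + (1 - a) • y0 := by
      simp [AffineMap.homothety_apply, smul_sub, sub_smul]; abel
    rw [e]
    exact h
  have h := measure_mono (μ := volume) hsub
  rw [Measure.addHaar_image_homothety] at h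
  have h2 := ENNReal.toReal_mono (cross_fin hb _).ne h
  rw [ENNReal.toReal_mul, ENNReal.toReal_ofReal (abs_nonneg _), abs_of_nonneg (by positivity)] at h2
  simpa [ωvol] using h2

lemma wt_ωvol {m : ℕ} {Ω : Set (EuclideanSpace ℝ (Fin (m+1)))} (ho : IsOpen Ω) (hc : Convex ℝ Ω)
    (hb : Bornology.IsBounded Ω) (hne : ∀ s ∈ Ioo (0:ℝ) 1, (cross Ω s).Nonempty) : Wt m (ωvol Ω) where
  pos x hx := by
    apply ENNReal.toReal_pos _ (cross_fin hb x).ne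
    have : IsOpen (cross Ω x) := ho.preimage (mkPt_cont m x)
    exact (this.measure_pos volume (hne x hx)).ne'
  A s t hs hst ht := by
    have h1 : ∀ r ∈ Ioo t 1, ωvol Ω s * (r - t) ^ m ≤ ωvol Ω t * (r - s) ^ m := by
      intro r hr
      have hrs : 0 < r - s := by linarith [hr.1]
      have := ω_comb hc hb (s := s) (hne r ⟨by linarith [hr.1], hr.2⟩) (a := (r - t) / (r - s))
        (div_nonneg (by linarith [hr.1]) hrs.le) (by rw [div_le_one hrs]; linarith)
      have e : (r - t) / (r - s) * s + (1 - (r - t) / (r - s)) * r = t := by field_simp; ring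
      rw [e, div_pow, div_mul_eq_mul_div, div_le_iff₀ (by positivity)] at this
      linarith
    have t1 : Tendsto (fun r => ωvol Ω s * (r - t) ^ m) (𝓝[<] 1) (𝓝 (ωvol Ω s * (1 - t) ^ m)) :=
      ((by fun_prop : Continuous (fun r => ωvol Ω s * (r - t) ^ m)).tendsto 1).mono_left nhdsWithin_le_nhds
    have t2 : Tendsto (fun r => ωvol Ω t * (r - s) ^ m) (𝓝[<] 1) (𝓝 (ωvol Ω t * (1 - s) ^ m)) :=
      ((by fun_prop : Continuous (fun r => ωvol Ω t * (r - s) ^ m)).tendsto 1).mono_left nhdsWithin_le_nhds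
    refine le_of_tendsto_of_tendsto t1 t2 ?_
    filter_upwards [Ioo_mem_nhdsLT ht] with r hr using h1 r hr
  B s t hs hst ht := by
    have h1 : ∀ r ∈ Ioo 0 s, ωvol Ω t * (s - r) ^ m ≤ ωvol Ω s * (t - r) ^ m := by
      intro r hr
      have hrs : 0 < t - r := by linarith [hr.2]
      have := ω_comb hc hb (s := t) (hne r ⟨hr.1, by linarith [hr.2]⟩) (a := (s - r) / (t - r))
        (div_nonneg (by linarith [hr.2]) hrs.le) (by rw [div_le_one hrs]; linarith)
      have e : (s - r) / (t - r) * t + (1 - (s - r) / (t - r)) * r = s := by field_simp; ring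
      rw [e, div_pow, div_mul_eq_mul_div, div_le_iff₀ (by positivity)] at this
      linarith
    have t1 : Tendsto (fun r => ωvol Ω t * (s - r) ^ m) (𝓝[>] 0) (𝓝 (ωvol Ω t * (s - 0) ^ m)) :=
      ((by fun_prop : Continuous (fun r => ωvol Ω t * (s - r) ^ m)).tendsto 0).mono_left nhdsWithin_le_nhds
    have t2 : Tendsto (fun r => ωvol Ω s * (t - r) ^ m) (𝓝[>] 0) (𝓝 (ωvol Ω s * (t - 0) ^ m)) :=
      ((by fun_prop : Continuous (fun r => ωvol Ω s * (t - r) ^ m)).tendsto 0).mono_left nhdsWithin_le_nhds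
    rw [sub_zero] at t1 t2
    refine le_of_tendsto_of_tendsto t1 t2 ?_
    filter_upwards [Ioo_mem_nhdsGT hs] with r hr using h1 r hr

/-- One-sided weight conditions on `(0,z]`. -/
structure LW (w : ℝ → ℝ) (z K : ℝ) : Prop where
  hz : 0 < z
  hK : 0 ≤ K
  cont : ContinuousOn w (Ioc 0 z)
  pos : ∀ x ∈ Ioc 0 z, 0 < w x
  mono : ∀ s t, 0 < s → s ≤ t → t ≤ z → w s ≤ K * w t

/-- flux -/
def JJ (w f : ℝ → ℝ) (x : ℝ) : ℝ := ∫ s in (0:ℝ)..x, w s * f s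

/-- normalized flux -/
def qq (w f : ℝ → ℝ) (x : ℝ) : ℝ := JJ w f x / w x

namespace LW

variable {w : ℝ → ℝ} {z K : ℝ}

lemma int (h : LW w z K) {f : ℝ → ℝ} (hf : ContinuousOn f (Icc 0 z)) :
    IntervalIntegrable (fun s => w s * f s) volume 0 z := by
  rw [intervalIntegrable_iff_integrableOn_Ioc_of_le h.hz.le]
  obtain ⟨M, hM⟩ := isCompact_Icc.exists_bound_of_continuousOn hf
  refine Integrable.of_bound (μ := volume.restrict (Ioc 0 z)) ?_ (K * w z * M) ?_
  · exact (h.cont.mul (hf.mono Ioc_subset_Icc_self)).aestronglyMeasurable measurableSet_Ioc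
  · rw [ae_restrict_iff' measurableSet_Ioc]
    refine Eventually.of_forall fun s hs => ?_
    rw [norm_mul, Real.norm_eq_abs, abs_of_pos (h.pos s hs)]
    have := h.pos s hs
    exact mul_le_mul (h.mono s z hs.1 hs.2 le_rfl) (hM s (Ioc_subset_Icc_self hs)) (norm_nonneg _)
      (this.le.trans (h.mono s z hs.1 hs.2 le_rfl))

lemma int' (h : LW w z K) {f : ℝ → ℝ} (hf : ContinuousOn f (Icc 0 z)) {x : ℝ} (hx : x ∈ Icc 0 z) :
    IntervalIntegrable (fun s => w s * f s) volume 0 x :=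
  (h.int hf).mono_set (by
    rw [uIcc_of_le hx.1, uIcc_of_le h.hz.le]; exact Icc_subset_Icc_right hx.2)

lemma q_bound (h : LW w z K) {f : ℝ → ℝ} (_hf : ContinuousOn f (Icc 0 z)) {c : ℝ} {k : ℕ}
    (hc : ∀ s ∈ Icc 0 z, |f s| ≤ c * s ^ k) {t : ℝ} (ht : t ∈ Icc 0 z) :
    |qq w f t| ≤ K * c * (t ^ (k + 1) / (k + 1)) := by
  rcases ht.1.eq_or_lt with h0 | h0
  · subst h0; simp [qq, JJ]
  have hp := h.pos t ⟨h0, ht.2⟩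
  rw [qq, abs_div, abs_of_pos hp, div_le_iff₀ hp, JJ]
  have h1 : ‖∫ s in (0:ℝ)..t, w s * f s‖ ≤ ∫ s in (0:ℝ)..t, K * w t * (c * s ^ k) := by
    refine intervalIntegral.norm_integral_le_of_norm_le ht.1 ?_ ?_
    · refine Eventually.of_forall fun s hs => ?_
      have hs' : s ∈ Ioc 0 z := ⟨hs.1, hs.2.trans ht.2⟩
      have := h.pos s hs'
      rw [norm_mul, Real.norm_eq_abs, abs_of_pos this]
      exact mul_le_mul (h.mono s t hs.1 hs.2 ht.2) (hc s (Ioc_subset_Icc_self hs')) (norm_nonneg _)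
        (this.le.trans (h.mono s t hs.1 hs.2 ht.2))
    · exact (by fun_prop : Continuous fun s : ℝ => K * w t * (c * s ^ k)).intervalIntegrable _ _
  rw [Real.norm_eq_abs] at h1
  refine h1.trans (le_of_eq ?_)
  rw [intervalIntegral.integral_const_mul, intervalIntegral.integral_const_mul, integral_pow]
  simp
  ring

lemma J_contOn (h : LW w z K) {f : ℝ → ℝ} (hf : ContinuousOn f (Icc 0 z)) :
    ContinuousOn (JJ w f) (Icc 0 z) := by
  have := intervalIntegral.continuousOn_primitive_interval' (h.int hf) (left_mem_uIcc)
  rwa [uIcc_of_le h.hz.le] at this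

lemma q_cont (h : LW w z K) {f : ℝ → ℝ} (hf : ContinuousOn f (Icc 0 z)) :
    ContinuousOn (qq w f) (Icc 0 z) := by
  intro x hx
  rcases hx.1.eq_or_lt with h0 | h0
  · subst h0
    obtain ⟨M, hM⟩ := isCompact_Icc.exists_bound_of_continuousOn hf
    have hb : ∀ t ∈ Icc 0 z, |qq w f t| ≤ K * M * t := by
      intro t ht
      have := h.q_bound hf (c := M) (k := 0) (by simpa using hM) ht
      simpa using this
    have h00 : qq w f 0 = 0 := by simp [qq, JJ]
    unfold ContinuousWithinAt
    rw [h00]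
    refine squeeze_zero_norm' (a := fun t => K * M * t) ?_ ?_
    · filter_upwards [self_mem_nhdsWithin] with t ht using hb t ht
    · have : Tendsto (fun t => K * M * t) (𝓝 0) (𝓝 (K * M * 0)) :=
        (by fun_prop : Continuous fun t => K * M * t).tendsto 0
      rw [mul_zero] at this
      exact this.mono_left nhdsWithin_le_nhds
  · have : ContinuousOn (qq w f) (Ioc 0 z) :=
      ((h.J_contOn hf).mono Ioc_subset_Icc_self).div h.cont fun t ht => (h.pos t ht).ne'
    have h2 := this x ⟨h0, hx.2⟩
    refine h2.mono_of_mem_nhdsWithin ?_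
    filter_upwards [self_mem_nhdsWithin, mem_nhdsWithin_of_mem_nhds (Ioi_mem_nhds h0)] with t ht ht'
    exact ⟨ht', ht.2⟩

lemma J_deriv (h : LW w z K) {f : ℝ → ℝ} (hf : ContinuousOn f (Icc 0 z)) {x : ℝ} (hx : x ∈ Ioo 0 z) :
    HasDerivAt (JJ w f) (w x * f x) x := by
  have hc : ContinuousOn (fun s => w s * f s) (Ioo 0 z) :=
    (h.cont.mono Ioo_subset_Ioc_self).mul (hf.mono Ioo_subset_Icc_self)
  refine intervalIntegral.integral_hasDerivAt_right (h.int' hf (Ioo_subset_Icc_self hx)) ?_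
    (hc.continuousAt (isOpen_Ioo.mem_nhds hx))
  exact hc.stronglyMeasurableAtFilter isOpen_Ioo x hx

lemma J_deriv_z (h : LW w z K) {f : ℝ → ℝ} (hf : ContinuousOn f (Icc 0 z)) :
    HasDerivWithinAt (JJ w f) (w z * f z) (Iic z) z := by
  have hc : ContinuousOn (fun s => w s * f s) (Ioc 0 z) :=
    h.cont.mul (hf.mono Ioc_subset_Icc_self)
  refine intervalIntegral.integral_hasDerivWithinAt_right (h.int hf) (t := Iic z) ?_ ?_
  · refine ⟨Ioc 0 z, Ioc_mem_nhdsLE h.hz, ?_⟩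
    exact hc.aestronglyMeasurable measurableSet_Ioc
  · exact (hc z ⟨h.hz, le_rfl⟩).mono_of_mem_nhdsWithin (Ioc_mem_nhdsLE h.hz)

lemma wq (h : LW w z K) (f : ℝ → ℝ) {x : ℝ} (hx : x ∈ Ioc 0 z) : w x * qq w f x = JJ w f x := by
  have := (h.pos x hx).ne'
  rw [qq]; field_simp

lemma wq_deriv (h : LW w z K) {f : ℝ → ℝ} (hf : ContinuousOn f (Icc 0 z)) {x : ℝ} (hx : x ∈ Ioo 0 z) :
    HasDerivAt (fun t => w t * qq w f t) (w x * f x) x := by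
  refine (h.J_deriv hf hx).congr_of_eventuallyEq ?_
  filter_upwards [isOpen_Ioo.mem_nhds hx] with t ht using h.wq f (Ioo_subset_Ioc_self ht)

lemma wq_deriv_z (h : LW w z K) {f : ℝ → ℝ} (hf : ContinuousOn f (Icc 0 z)) :
    HasDerivWithinAt (fun t => w t * qq w f t) (w z * f z) (Iic z) z := by
  refine (h.J_deriv_z hf).congr_of_eventuallyEq ?_ (h.wq f ⟨h.hz, le_rfl⟩)
  filter_upwards [Ioc_mem_nhdsLE h.hz] with t ht using h.wq f ht

/-- second primitive -/
lemma S_deriv (h : LW w z K) {f : ℝ → ℝ} (hf : ContinuousOn f (Icc 0 z)) {x : ℝ} (hx : x ∈ Icc 0 z) :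
    HasDerivWithinAt (fun x => ∫ t in (0:ℝ)..x, qq w f t) (qq w f x) (Icc 0 z) x := by
  have hq := h.q_cont hf
  have : Fact (x ∈ Icc 0 z) := ⟨hx⟩
  refine intervalIntegral.integral_hasDerivWithinAt_right (t := Icc 0 z) ?_ ?_ (hq x hx)
  · refine (hq.mono ?_).intervalIntegrable
    rw [uIcc_of_le hx.1]; exact Icc_subset_Icc_right hx.2
  · exact ⟨Icc 0 z, self_mem_nhdsWithin, hq.aestronglyMeasurable measurableSet_Icc⟩

lemma S_bound (h : LW w z K) {f : ℝ → ℝ} (hf : ContinuousOn f (Icc 0 z)) {c : ℝ} {k : ℕ} (hc0 : 0 ≤ c)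
    (hc : ∀ s ∈ Icc 0 z, |f s| ≤ c * s ^ k) {x : ℝ} (hx : x ∈ Icc 0 z) :
    |∫ t in (0:ℝ)..x, qq w f t| ≤ c * (K * z) / (k + 1) * x ^ (k + 1) := by
  have h1 : ‖∫ t in (0:ℝ)..x, qq w f t‖ ≤ (K * c * (x ^ (k + 1) / (k + 1))) * |x - 0| := by
    refine intervalIntegral.norm_integral_le_of_norm_le_const fun t ht => ?_
    rw [uIoc_of_le hx.1] at ht
    have := h.q_bound hf hc ⟨ht.1.le, ht.2.trans hx.2⟩
    refine this.trans ?_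
    have h0 := ht.1.le
    have := h.hK
    have := ht.2
    gcongr
  rw [Real.norm_eq_abs, sub_zero, abs_of_nonneg hx.1] at h1
  refine h1.trans ?_
  have h2 : K * c * (x ^ (k + 1) / (k + 1)) * x ≤ K * c * (x ^ (k + 1) / (k + 1)) * z := by
    have h0 := hx.1
    have := h.hK
    have := hx.2
    gcongr
  refine h2.trans (le_of_eq ?_)
  ring

/-- extension -/
def ext (h : LW w z K) (f : C(Icc (0:ℝ) z, ℝ)) : ℝ → ℝ := IccExtend h.hz.le f

lemma ext_cont (h : LW w z K) (f : C(Icc (0:ℝ) z, ℝ)) : Continuous (h.ext f) :=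
  f.continuous.Icc_extend'

lemma ext_apply (h : LW w z K) (f : C(Icc (0:ℝ) z, ℝ)) {x : ℝ} (hx : x ∈ Icc 0 z) :
    h.ext f x = f ⟨x, hx⟩ := IccExtend_of_mem _ _ hx

lemma ext_apply' (h : LW w z K) (f : C(Icc (0:ℝ) z, ℝ)) (x : ℝ) :
    h.ext f x = f (projIcc 0 z h.hz.le x) := rfl

lemma J_add (h : LW w z K) (f g : C(Icc (0:ℝ) z, ℝ)) {x : ℝ} (hx : x ∈ Icc 0 z) :
    JJ w (h.ext (f + g)) x = JJ w (h.ext f) x + JJ w (h.ext g) x := by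
  unfold JJ
  rw [← intervalIntegral.integral_add (h.int' (h.ext_cont f).continuousOn hx)
    (h.int' (h.ext_cont g).continuousOn hx)]
  congr 1; ext s; simp only [ext_apply', ContinuousMap.add_apply]; ring

lemma J_smul (h : LW w z K) (a : ℝ) (f : C(Icc (0:ℝ) z, ℝ)) (x : ℝ) :
    JJ w (h.ext (a • f)) x = a * JJ w (h.ext f) x := by
  unfold JJ
  rw [← intervalIntegral.integral_const_mul]
  congr 1; ext s; simp only [ext_apply', ContinuousMap.smul_apply, smul_eq_mul]; ring

lemma q_add (h : LW w z K) (f g : C(Icc (0:ℝ) z, ℝ)) {x : ℝ} (hx : x ∈ Icc 0 z) :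
    qq w (h.ext (f + g)) x = qq w (h.ext f) x + qq w (h.ext g) x := by
  simp only [qq, h.J_add f g hx, add_div]

lemma q_smul (h : LW w z K) (a : ℝ) (f : C(Icc (0:ℝ) z, ℝ)) (x : ℝ) :
    qq w (h.ext (a • f)) x = a * qq w (h.ext f) x := by
  simp only [qq, h.J_smul]; ring

lemma norm_b (h : LW w z K) (f : C(Icc (0:ℝ) z, ℝ)) : ∀ s ∈ Icc 0 z, |h.ext f s| ≤ ‖f‖ * s ^ 0 := by
  intro s _
  simpa [ext_apply'] using f.norm_coe_le_norm _

/-- flux functional at `z` -/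
def Q (h : LW w z K) : C(Icc (0:ℝ) z, ℝ) →L[ℝ] ℝ :=
  LinearMap.mkContinuous
    { toFun := fun f => qq w (h.ext f) z
      map_add' := fun f g => h.q_add f g ⟨h.hz.le, le_rfl⟩
      map_smul' := fun a f => by simpa using h.q_smul a f z } (K * z) (fun f => by
        have := h.q_bound (h.ext_cont f).continuousOn (h.norm_b f) (t := z) ⟨h.hz.le, le_rfl⟩
        simp at this ⊢
        linarith)

lemma Q_apply (h : LW w z K) (f : C(Icc (0:ℝ) z, ℝ)) : h.Q f = qq w (h.ext f) z := rfl

/-- Volterra operator as a function -/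
def T0 (h : LW w z K) (f : C(Icc (0:ℝ) z, ℝ)) : C(Icc (0:ℝ) z, ℝ) where
  toFun x := ∫ t in (0:ℝ)..x, qq w (h.ext f) t
  continuous_toFun := by
    have : ContinuousOn (fun x => ∫ t in (0:ℝ)..x, qq w (h.ext f) t) (Icc 0 z) := fun x hx =>
      (h.S_deriv (h.ext_cont f).continuousOn hx).continuousWithinAt
    exact continuousOn_iff_continuous_domRestrict.1 this

/-- Volterra operator -/
def T (h : LW w z K) : C(Icc (0:ℝ) z, ℝ) →L[ℝ] C(Icc (0:ℝ) z, ℝ) :=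
  LinearMap.mkContinuous
    { toFun := h.T0
      map_add' := fun f g => by
        ext ⟨x, hx⟩
        have hi : ∀ f, IntervalIntegrable (qq w (h.ext f)) volume 0 x := fun f => by
          refine ((h.q_cont (h.ext_cont f).continuousOn).mono ?_).intervalIntegrable
          rw [uIcc_of_le hx.1]; exact Icc_subset_Icc_right hx.2
        change (∫ t in (0:ℝ)..x, qq w (h.ext (f + g)) t) = (∫ t in (0:ℝ)..x, qq w (h.ext f) t) +
          ∫ t in (0:ℝ)..x, qq w (h.ext g) t
        rw [← intervalIntegral.integral_add (hi f) (hi g)]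
        refine intervalIntegral.integral_congr fun t ht => ?_
        rw [uIcc_of_le hx.1] at ht
        exact h.q_add f g ⟨ht.1, ht.2.trans hx.2⟩
      map_smul' := fun a f => by
        ext ⟨x, hx⟩
        change (∫ t in (0:ℝ)..x, qq w (h.ext (a • f)) t) = a * (∫ t in (0:ℝ)..x, qq w (h.ext f) t)
        simp only [q_smul]
        rw [intervalIntegral.integral_const_mul] } (K * z * z) (fun f => by
        have hh := h.hK
        have hz := h.hz
        rw [ContinuousMap.norm_le _ (by positivity)]
        rintro ⟨x, hx⟩
        have := h.S_bound (h.ext_cont f).continuousOn (norm_nonneg f) (h.norm_b f) hx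
        refine this.trans ?_
        have h2 : ‖f‖ * (K * z) * x ≤ ‖f‖ * (K * z) * z := by
          have := hx.2
          gcongr
        simp
        linarith)

lemma T_apply (h : LW w z K) (f : C(Icc (0:ℝ) z, ℝ)) {x : ℝ} (hx : x ∈ Icc 0 z) :
    h.T f ⟨x, hx⟩ = ∫ t in (0:ℝ)..x, qq w (h.ext f) t := rfl

lemma Tpow_bound (h : LW w z K) (f : C(Icc (0:ℝ) z, ℝ)) (k : ℕ) : ∀ s ∈ Icc 0 z,
    |h.ext ((h.T ^ k) f) s| ≤ ‖f‖ * (K * z) ^ k / k.factorial * s ^ k := by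
  induction k with
  | zero => simpa using h.norm_b f
  | succ k ih =>
    intro s hs
    rw [h.ext_apply _ hs, pow_succ', mul_apply_eq_comp, h.T_apply]
    have hh := h.hK
    have hz := h.hz
    refine (h.S_bound (h.ext_cont _).continuousOn (by positivity) ih hs).trans (le_of_eq ?_)
    rw [Nat.factorial_succ]
    push_cast
    field_simp
    ring

lemma Tpow_norm (h : LW w z K) (f : C(Icc (0:ℝ) z, ℝ)) (k : ℕ) :
    ‖(h.T ^ k) f‖ ≤ ‖f‖ * ((K * z * z) ^ k / k.factorial) := by
  have hh := h.hK
  have hz := h.hz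
  rw [ContinuousMap.norm_le _ (by positivity)]
  rintro ⟨x, hx⟩
  have := h.Tpow_bound f k x hx
  rw [h.ext_apply _ hx] at this
  refine this.trans ?_
  have h2 : x ^ k ≤ z ^ k := pow_le_pow_left₀ hx.1 hx.2 k
  calc _ ≤ ‖f‖ * (K * z) ^ k / k.factorial * z ^ k := by gcongr
    _ = _ := by rw [mul_pow (K * z) z]; ring

/-- solution -/
def U (h : LW w z K) (l : ℝ) : C(Icc (0:ℝ) z, ℝ) := ∑' k : ℕ, (-l) ^ k • (h.T ^ k) 1

lemma term_bound (h : LW w z K) (l L : ℝ) (hl : |l| ≤ L) (k : ℕ) :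
    ‖(-l) ^ k • (h.T ^ k) 1‖ ≤ ‖(1 : C(Icc (0:ℝ) z, ℝ))‖ * ((L * (K * z * z)) ^ k / k.factorial) := by
  rw [norm_smul, norm_pow, norm_neg, Real.norm_eq_abs]
  have hh := h.hK
  have hz := h.hz
  calc _ ≤ L ^ k * (‖(1 : C(Icc (0:ℝ) z, ℝ))‖ * ((K * z * z) ^ k / k.factorial)) := by
        have := h.Tpow_norm 1 k
        have : 0 ≤ L := (abs_nonneg l).trans hl
        gcongr
    _ = _ := by rw [mul_pow L]; ring

lemma U_summable (h : LW w z K) (l : ℝ) : Summable fun k : ℕ => (-l) ^ k • (h.T ^ k) (1 : C(Icc (0:ℝ) z, ℝ)) :=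
  Summable.of_norm_bounded ((Real.summable_pow_div_factorial _).mul_left _) (h.term_bound l |l| le_rfl)

lemma U_cont (h : LW w z K) : Continuous h.U := by
  rw [continuous_iff_continuousAt]
  intro l
  have : ContinuousOn h.U (Ioo (l-1) (l+1)) := by
    refine continuousOn_tsum (u := fun k : ℕ => ‖(1 : C(Icc (0:ℝ) z, ℝ))‖ *
      (((|l| + 1) * (K * z * z)) ^ k / k.factorial)) (fun k => ?_)
      ((Real.summable_pow_div_factorial _).mul_left _) (fun k x hx => h.term_bound x _ ?_ k)
    · exact (by fun_prop : Continuous fun x : ℝ => (-x) ^ k • (h.T ^ k) (1 : C(Icc (0:ℝ) z, ℝ))).continuousOn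
    · rw [abs_le]
      constructor <;> linarith [hx.1, hx.2, neg_abs_le l, le_abs_self l]
  exact this.continuousAt (Ioo_mem_nhds (by linarith) (by linarith))

lemma U_eq (h : LW w z K) (l : ℝ) : h.U l = 1 - l • h.T (h.U l) := by
  have h1 := (h.U_summable l).tsum_eq_zero_add
  have h2 : h.T (h.U l) = ∑' k : ℕ, h.T ((-l) ^ k • (h.T ^ k) 1) := h.T.map_tsum (h.U_summable l)
  rw [h2]
  unfold U
  rw [h1]
  rw [sub_eq_add_neg, ← neg_smul, ← tsum_const_smul'' (-l)]
  congr 1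
  · simp
  congr 1
  ext1 k
  rw [map_smul, smul_smul, ← pow_succ', pow_succ' h.T]; rfl

lemma uniq (h : LW w z K) {l : ℝ} {f : C(Icc (0:ℝ) z, ℝ)} (hf : f = -(l • h.T f)) : f = 0 := by
  have h1 : ∀ k : ℕ, f = (-l) ^ k • (h.T ^ k) f := by
    intro k
    induction k with
    | zero => simp
    | succ k ih =>
      have h2 : (h.T ^ (k+1)) f = (h.T ^ k) (h.T f) := by rw [pow_succ]; rfl
      rw [h2, pow_succ, mul_smul, ← map_smul, neg_smul, ← hf]
      exact ih
  have h2 : ∀ k : ℕ, ‖f‖ ≤ ‖f‖ * ((|l| * (K * z * z)) ^ k / k.factorial) := by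
    intro k
    conv_lhs => rw [h1 k]
    rw [norm_smul, norm_pow, norm_neg, Real.norm_eq_abs]
    calc _ ≤ |l| ^ k * (‖f‖ * ((K * z * z) ^ k / k.factorial)) := by
          have := h.Tpow_norm f k
          gcongr
      _ = _ := by rw [mul_pow |l|]; ring
  have h3 := (FloorSemiring.tendsto_pow_div_factorial_atTop (|l| * (K * z * z))).const_mul ‖f‖
  rw [mul_zero] at h3
  have := ge_of_tendsto' h3 h2
  exact norm_le_zero_iff.1 this

end LW

namespace LW

variable {w : ℝ → ℝ} {z K : ℝ}

/-- left solution -/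
def u (h : LW w z K) (l : ℝ) : ℝ → ℝ := h.ext (h.U l)

/-- its normalized flux -/
def q (h : LW w z K) (l : ℝ) : ℝ → ℝ := qq w (h.u l)

lemma u_contOn (h : LW w z K) (l : ℝ) : ContinuousOn (h.u l) (Icc 0 z) := (h.ext_cont _).continuousOn

lemma u_eq (h : LW w z K) (l : ℝ) {x : ℝ} (hx : x ∈ Icc 0 z) :
    h.u l x = 1 - l * ∫ t in (0:ℝ)..x, h.q l t := by
  have := congrArg (fun f : C(Icc (0:ℝ) z, ℝ) => f ⟨x, hx⟩) (h.U_eq l)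
  simp only [ContinuousMap.sub_apply, ContinuousMap.one_apply, ContinuousMap.smul_apply, smul_eq_mul,
    h.T_apply] at this
  rw [u, h.ext_apply _ hx, this]; rfl

lemma u_zero (h : LW w z K) (l : ℝ) : h.u l 0 = 1 := by
  rw [h.u_eq l ⟨le_rfl, h.hz.le⟩]; simp

lemma q_zero (h : LW w z K) (l : ℝ) : h.q l 0 = 0 := by
  simp [q, qq, JJ]

lemma q_contOn (h : LW w z K) (l : ℝ) : ContinuousOn (h.q l) (Icc 0 z) := h.q_cont (h.u_contOn l)

lemma u_deriv (h : LW w z K) (l : ℝ) {x : ℝ} (hx : x ∈ Icc 0 z) :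
    HasDerivWithinAt (h.u l) (-(l * h.q l x)) (Icc 0 z) x := by
  have := ((h.S_deriv (h.u_contOn l) hx).const_mul l).const_sub 1
  exact this.congr (fun y hy => h.u_eq l hy) (h.u_eq l hx)

lemma u_cont_l (h : LW w z K) : Continuous fun l => h.u l z := by
  have : (fun l => h.u l z) = fun l => (h.U l) ⟨z, h.hz.le, le_rfl⟩ := by
    ext l; rw [u, h.ext_apply _ ⟨h.hz.le, le_rfl⟩]
  rw [this]
  exact (continuous_eval_const _).comp h.U_cont

lemma q_cont_l (h : LW w z K) : Continuous fun l => h.q l z := h.Q.continuous.comp h.U_cont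

lemma J_pos (h : LW w z K) {f : ℝ → ℝ} (hf : ContinuousOn f (Icc 0 z)) (h0 : ∀ x ∈ Icc 0 z, 0 ≤ f x)
    (h1 : 0 < f 0) : 0 < JJ w f z := by
  have hev : ∀ᶠ x in 𝓝[Icc 0 z] 0, 0 < f x :=
    (hf 0 ⟨le_rfl, h.hz.le⟩).eventually (Ioi_mem_nhds h1)
  rw [Metric.nhdsWithin_basis_ball.eventually_iff] at hev
  obtain ⟨e, he, hev⟩ := hev
  set d := min (e / 2) z with hd
  have hd0 : 0 < d := lt_min (by linarith) h.hz
  have hdz : d ≤ z := min_le_right _ _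
  have hde : d ≤ e / 2 := min_le_left _ _
  have i1 := h.int' hf (x := d) ⟨hd0.le, hdz⟩
  have i0 := h.int hf
  have i2 : IntervalIntegrable (fun s => w s * f s) volume d z := i1.symm.trans i0
  unfold JJ
  rw [← intervalIntegral.integral_add_adjacent_intervals i1 i2]
  have p1 : 0 < ∫ s in (0:ℝ)..d, w s * f s := by
    refine intervalIntegral.intervalIntegral_pos_of_pos_on i1 (fun x hx => ?_) hd0
    refine mul_pos (h.pos x ⟨hx.1, hx.2.le.trans hdz⟩) (hev ⟨?_, hx.1.le, hx.2.le.trans hdz⟩)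
    rw [Metric.mem_ball, Real.dist_eq, sub_zero, abs_of_pos hx.1]
    linarith [hx.2]
  have p2 : 0 ≤ ∫ s in d..z, w s * f s := by
    refine intervalIntegral.integral_nonneg hdz fun x hx => ?_
    have : 0 < x := hd0.trans_le hx.1
    exact mul_nonneg (h.pos x ⟨this, hx.2⟩).le (h0 x ⟨this.le, hx.2⟩)
  linarith

lemma q_pos (h : LW w z K) {f : ℝ → ℝ} (hf : ContinuousOn f (Icc 0 z)) (h0 : ∀ x ∈ Icc 0 z, 0 ≤ f x)
    (h1 : 0 < f 0) : 0 < qq w f z :=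
  div_pos (h.J_pos hf h0 h1) (h.pos z ⟨h.hz, le_rfl⟩)

lemma u_at0 (h : LW w z K) {x : ℝ} (hx : x ∈ Icc 0 z) : h.u 0 x = 1 := by
  rw [h.u_eq 0 hx]; simp

lemma q_at0 (h : LW w z K) : 0 < h.q 0 z := by
  refine h.q_pos (h.u_contOn 0) (fun x hx => ?_) ?_
  · rw [h.u_at0 hx]; norm_num
  · rw [h.u_zero]; norm_num

lemma green (h : LW w z K) (l l1 : ℝ) (h1 : h.q l1 z = 0) :
    l * h.q l z * h.u l1 z = (l - l1) * h.Q (h.U l * h.U l1) := by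
  have hzz : z ∈ Icc 0 z := ⟨h.hz.le, le_rfl⟩
  have hw := h.pos z ⟨h.hz, le_rfl⟩
  let G : ℝ → ℝ := fun x => l * JJ w (h.u l) x * h.u l1 x - l1 * h.u l x * JJ w (h.u l1) x
  have hd : ∀ x ∈ Ioo 0 z, HasDerivAt G ((l - l1) * (w x * (h.u l x * h.u l1 x))) x := by
    intro x hx
    have hx' := Ioo_subset_Icc_self hx
    have n : Icc 0 z ∈ 𝓝 x := Icc_mem_nhds hx.1 hx.2
    have a1 := (h.u_deriv l hx').hasDerivAt n
    have a2 := (h.u_deriv l1 hx').hasDerivAt n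
    have b1 := h.J_deriv (h.u_contOn l) hx
    have b2 := h.J_deriv (h.u_contOn l1) hx
    have := ((b1.const_mul l).mul a2).sub ((a1.const_mul l1).mul b2)
    refine this.congr_deriv ?_
    have e1 := h.wq (h.u l) (Ioo_subset_Ioc_self hx)
    have e2 := h.wq (h.u l1) (Ioo_subset_Ioc_self hx)
    rw [← e1, ← e2]
    simp only [q]
    ring
  have hc : ContinuousOn G (Icc 0 z) :=
    (((h.J_contOn (h.u_contOn l)).const_mul l).mul (h.u_contOn l1)).sub
      (((h.u_contOn l).const_mul l1).mul (h.J_contOn (h.u_contOn l1)))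
  have hi : IntervalIntegrable (fun x => (l - l1) * (w x * (h.u l x * h.u l1 x))) volume 0 z :=
    (h.int (f := fun x => h.u l x * h.u l1 x) ((h.u_contOn l).mul (h.u_contOn l1))).const_mul _
  have := intervalIntegral.integral_eq_sub_of_hasDerivAt_of_le h.hz.le hc hd hi
  rw [intervalIntegral.integral_const_mul] at this
  have g0 : G 0 = 0 := by simp [G, JJ]
  have hJ : JJ w (h.u l1) z = 0 := by
    rw [← h.wq (h.u l1) ⟨h.hz, le_rfl⟩]
    change w z * h.q l1 z = 0
    rw [h1, mul_zero]
  have gz : G z = w z * (l * h.q l z * h.u l1 z) := by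
    simp only [G]
    rw [hJ, ← h.wq (h.u l) ⟨h.hz, le_rfl⟩]
    simp only [q]
    ring
  have hQ : (∫ x in (0:ℝ)..z, w x * (h.u l x * h.u l1 x)) = w z * h.Q (h.U l * h.U l1) := by
    rw [Q_apply, h.wq _ ⟨h.hz, le_rfl⟩]; rfl
  rw [g0, gz, hQ, sub_zero] at this
  have h2 : w z * (l * h.q l z * h.u l1 z) = w z * ((l - l1) * h.Q (h.U l * h.U l1)) := by
    rw [← this]; ring
  exact mul_left_cancel₀ hw.ne' h2

lemma u_neg (h : LW w z K) {l1 : ℝ} (h1 : h.q l1 z = 0) (hl : 0 < l1)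
    (hp : ∀ l ∈ Ioo 0 l1, 0 < h.q l z) : h.u l1 z < 0 := by
  have hQ : 0 < h.Q (h.U l1 * h.U l1) := by
    refine h.q_pos (h.ext_cont _).continuousOn (fun x hx => ?_) ?_
    · rw [h.ext_apply _ hx]; exact mul_self_nonneg _
    · have e : h.ext (h.U l1 * h.U l1) 0 = h.u l1 0 * h.u l1 0 := rfl
      rw [e, h.u_zero]; norm_num
  have hc : Continuous fun l => h.Q (h.U l * h.U l1) :=
    h.Q.continuous.comp (h.U_cont.mul continuous_const)
  have ev : ∀ᶠ l in 𝓝[<] l1, 0 < h.Q (h.U l * h.U l1) :=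
    ((hc.tendsto l1).eventually (Ioi_mem_nhds hQ)).filter_mono nhdsWithin_le_nhds
  obtain ⟨l, hlQ, hl'⟩ := (ev.and (Ioo_mem_nhdsLT hl)).exists
  have g := h.green l l1 h1
  have : (l - l1) * h.Q (h.U l * h.U l1) < 0 := mul_neg_of_neg_of_pos (by linarith [hl'.2]) hlQ
  rw [← g] at this
  have p := mul_pos hl'.1 (hp l hl')
  by_contra hcon
  push Not at hcon
  have := mul_nonneg p.le hcon
  linarith

lemma qq_congr {f g : ℝ → ℝ} {x : ℝ} (hx : 0 ≤ x) (hfg : ∀ s ∈ Icc 0 x, f s = g s) :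
    qq w f x = qq w g x := by
  unfold qq JJ
  congr 1
  refine intervalIntegral.integral_congr fun s hs => ?_
  rw [uIcc_of_le hx] at hs
  simp only [hfg s hs]

lemma flux (h : LW w z K) {μ : ℝ} {f fd : ℝ → ℝ} (hf : ContinuousOn f (Icc 0 z))
    (hfd : ContinuousOn fd (Icc 0 z)) (h0 : fd 0 = 0)
    (hd : ∀ x ∈ Ioo 0 z, HasDerivAt (fun t => w t * fd t) (-(μ * w x * f x)) x) :
    ∀ x ∈ Icc 0 z, fd x = -(μ * qq w f x) := by
  intro x hx
  rcases hx.1.eq_or_lt with hx0 | hx0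
  · subst hx0; simp [h0, qq, JJ]
  have hc : ContinuousOn (fun t => w t * fd t) (Icc 0 z) := by
    intro t ht
    rcases ht.1.eq_or_lt with h0t | h0t
    · subst h0t
      have h3 : Tendsto (fun t => (K * w z + |w 0|) * |fd t|) (𝓝[Icc 0 z] 0) (𝓝 0) := by
        have := ((hfd 0 ht).abs).const_mul (K * w z + |w 0|)
        unfold ContinuousWithinAt at this
        simpa [h0] using this
      unfold ContinuousWithinAt
      simp only [h0, mul_zero]
      refine squeeze_zero_norm' ?_ h3
      filter_upwards [self_mem_nhdsWithin] with t ht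
      rw [norm_mul, Real.norm_eq_abs, Real.norm_eq_abs]
      have hKw : 0 ≤ K * w z := mul_nonneg h.hK (h.pos z ⟨h.hz, le_rfl⟩).le
      refine mul_le_mul_of_nonneg_right ?_ (abs_nonneg _)
      rcases ht.1.eq_or_lt with h0t | h0t
      · rw [← h0t]; linarith
      · rw [abs_of_pos (h.pos t ⟨h0t, ht.2⟩)]
        have := h.mono t z h0t ht.2 le_rfl
        have := abs_nonneg (w 0)
        linarith
    · have : ContinuousOn (fun t => w t * fd t) (Ioc 0 z) :=
        h.cont.mul (hfd.mono Ioc_subset_Icc_self)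
      refine (this t ⟨h0t, ht.2⟩).mono_of_mem_nhdsWithin ?_
      filter_upwards [self_mem_nhdsWithin, mem_nhdsWithin_of_mem_nhds (Ioi_mem_nhds h0t)] with s hs hs'
      exact ⟨hs', hs.2⟩
  have hi : IntervalIntegrable (fun x => -(μ * w x * f x)) volume 0 x := by
    have := ((h.int' hf hx).const_mul (-μ))
    refine this.congr ?_
    intro s _
    ring
  have := intervalIntegral.integral_eq_sub_of_hasDerivAt_of_le hx.1
    (hc.mono (Icc_subset_Icc_right hx.2)) (fun y hy => hd y ⟨hy.1, hy.2.trans_le hx.2⟩) hi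
  have e : (∫ y in (0:ℝ)..x, -(μ * w y * f y)) = -μ * JJ w f x := by
    unfold JJ
    rw [← intervalIntegral.integral_const_mul]
    congr 1; ext s; ring
  rw [e, h0, mul_zero, sub_zero] at this
  have hw := h.pos x ⟨hx0, hx.2⟩
  rw [qq]
  field_simp
  linarith

lemma uniq_sol (h : LW w z K) {μ : ℝ} {f fd : ℝ → ℝ}
    (hf : ∀ x ∈ Icc 0 z, HasDerivWithinAt f (fd x) (Icc 0 z) x)
    (hfd : ContinuousOn fd (Icc 0 z)) (h0 : fd 0 = 0)
    (hd : ∀ x ∈ Ioo 0 z, HasDerivAt (fun t => w t * fd t) (-(μ * w x * f x)) x) :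
    fd z = -(μ * (f 0 * h.q μ z)) := by
  have hfc : ContinuousOn f (Icc 0 z) := fun x hx => (hf x hx).continuousWithinAt
  have hfl := h.flux hfc hfd h0 hd
  let F : C(Icc (0:ℝ) z, ℝ) := ⟨(Icc 0 z).domRestrict f, continuousOn_iff_continuous_domRestrict.1 hfc⟩
  have hF : ∀ x ∈ Icc 0 z, h.ext F x = f x := fun x hx => by rw [h.ext_apply F hx]; rfl
  have hqF : ∀ x ∈ Icc 0 z, qq w (h.ext F) x = qq w f x := fun x hx =>
    qq_congr hx.1 fun s hs => hF s ⟨hs.1, hs.2.trans hx.2⟩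
  have hFe : F = f 0 • (1 : C(Icc (0:ℝ) z, ℝ)) - μ • h.T F := by
    ext ⟨x, hx⟩
    simp only [ContinuousMap.sub_apply, ContinuousMap.smul_apply, ContinuousMap.one_apply, smul_eq_mul,
      h.T_apply]
    have i : IntervalIntegrable fd volume 0 x := by
      refine (hfd.mono ?_).intervalIntegrable
      rw [uIcc_of_le hx.1]; exact Icc_subset_Icc_right hx.2
    have := intervalIntegral.integral_eq_sub_of_hasDerivAt_of_le hx.1
      (hfc.mono (Icc_subset_Icc_right hx.2)) (fun y hy => (hf y ⟨hy.1.le, hy.2.le.trans hx.2⟩).hasDerivAt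
        (Icc_mem_nhds hy.1 (hy.2.trans_le hx.2))) i
    have e : (∫ y in (0:ℝ)..x, fd y) = -μ * ∫ t in (0:ℝ)..x, qq w (h.ext F) t := by
      rw [← intervalIntegral.integral_const_mul]
      refine intervalIntegral.integral_congr fun s hs => ?_
      rw [uIcc_of_le hx.1] at hs
      have hs' : s ∈ Icc 0 z := ⟨hs.1, hs.2.trans hx.2⟩
      simp only [hqF s hs', hfl s hs']
      ring
    have e2 : F ⟨x, hx⟩ = f x := rfl
    rw [e2]
    linarith
  have hE : F - f 0 • h.U μ = -(μ • h.T (F - f 0 • h.U μ)) := by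
    rw [map_sub, map_smul]
    conv_lhs => rw [hFe, h.U_eq μ]
    module
  have hE0 := sub_eq_zero.1 (h.uniq hE)
  have : qq w f z = f 0 * h.q μ z := by
    rw [← hqF z ⟨h.hz.le, le_rfl⟩, ← Q_apply, hE0, map_smul]; rfl
  rw [hfl z ⟨h.hz.le, le_rfl⟩, this]

end LW

lemma Wt.lw {m : ℕ} {w : ℝ → ℝ} (h : Wt m w) {z : ℝ} (hz : z ∈ Ioo (0:ℝ) 1) :
    LW w z ((1 - z) ^ m)⁻¹ where
  hz := hz.1
  hK := by have : 0 < 1 - z := by linarith [hz.2]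
           positivity
  cont := h.cont.mono fun x hx => ⟨hx.1, hx.2.trans_lt hz.2⟩
  pos x hx := h.pos x ⟨hx.1, hx.2.trans_lt hz.2⟩
  mono s t hs hst ht := by
    have h1 := h.A s t hs hst (ht.trans_lt hz.2)
    have hz1 : 0 < 1 - z := by linarith [hz.2]
    have hwt := h.pos t ⟨hs.trans_le hst, ht.trans_lt hz.2⟩
    have hws := h.pos s ⟨hs, hst.trans_lt (ht.trans_lt hz.2)⟩
    rw [inv_mul_eq_div, le_div_iff₀ (by positivity)]
    calc w s * (1 - z) ^ m ≤ w s * (1 - t) ^ m := by gcongr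
      _ ≤ w t * (1 - s) ^ m := h1
      _ ≤ w t * 1 := by
        gcongr
        exact pow_le_one₀ (by linarith [hz.2]) (by linarith)
      _ = w t := mul_one _

lemma glue_deriv {z : ℝ} (hz : z ∈ Ioo (0:ℝ) 1) {f fd : ℝ → ℝ}
    (h1 : ∀ x ∈ Icc 0 z, HasDerivWithinAt f (fd x) (Icc 0 z) x)
    (h2 : ∀ x ∈ Icc z 1, HasDerivWithinAt f (fd x) (Icc z 1) x) :
    ∀ x ∈ Icc (0:ℝ) 1, HasDerivWithinAt f (fd x) (Icc 0 1) x := by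
  intro x hx
  rcases lt_trichotomy x z with h | h | h
  · refine (h1 x ⟨hx.1, h.le⟩).mono_of_mem_nhdsWithin ?_
    filter_upwards [self_mem_nhdsWithin, mem_nhdsWithin_of_mem_nhds (Iio_mem_nhds h)] with t ht ht'
    exact ⟨ht.1, (mem_Iio.1 ht').le⟩
  · subst h
    have := (h1 x ⟨hx.1, le_rfl⟩).union (h2 x ⟨le_rfl, hx.2⟩)
    rwa [Icc_union_Icc_eq_Icc hx.1 hx.2] at this
  · refine (h2 x ⟨h.le, hx.2⟩).mono_of_mem_nhdsWithin ?_
    filter_upwards [self_mem_nhdsWithin, mem_nhdsWithin_of_mem_nhds (Ioi_mem_nhds h)] with t ht ht'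
    exact ⟨(mem_Ioi.1 ht').le, ht.2⟩

lemma hd_refl (x : ℝ) (s : Set ℝ) : HasDerivWithinAt (fun x : ℝ => 1 - x) (-1) s x := by
  simpa using (hasDerivWithinAt_id x s).const_sub 1

lemma glue {w : ℝ → ℝ} {z K K' : ℝ} (hz : z ∈ Ioo (0:ℝ) 1) (h : LW w z K)
    (h' : LW (fun x => w (1 - x)) (1 - z) K') {l : ℝ}
    (hD : h.u l z * h'.q l (1 - z) + h.q l z * h'.u l (1 - z) = 0) : IsNeumannEigenvalue w l := by
  obtain ⟨a, b, hab, e1, e2⟩ : ∃ a b : ℝ, (a ≠ 0 ∨ b ≠ 0) ∧ a * h.u l z = b * h'.u l (1 - z) ∧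
      -(a * h.q l z) = b * h'.q l (1 - z) := by
    by_cases c1 : h'.u l (1 - z) ≠ 0 ∨ h.u l z ≠ 0
    · exact ⟨_, _, c1, by ring, by linarith⟩
    push Not at c1
    by_cases c2 : h'.q l (1 - z) ≠ 0 ∨ -h.q l z ≠ 0
    · exact ⟨_, _, c2, by rw [c1.1, c1.2]; ring, by ring⟩
    push Not at c2
    exact ⟨1, 1, by norm_num, by rw [c1.1, c1.2], by rw [one_mul, c2.2, c2.1]; ring⟩
  let f : ℝ → ℝ := fun x => if x ≤ z then a * h.u l x else b * h'.u l (1 - x)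
  let fd : ℝ → ℝ := fun x => if x ≤ z then -(l * (a * h.q l x)) else l * (b * h'.q l (1 - x))
  have f1 : ∀ x ≤ z, f x = a * h.u l x := fun x hx => if_pos hx
  have f2 : ∀ x, z ≤ x → f x = b * h'.u l (1 - x) := fun x hx => by
    rcases hx.eq_or_lt with hx | hx
    · rw [f1 x hx.ge, ← hx, e1]
    · exact if_neg (not_le.2 hx)
  have d1 : ∀ x ≤ z, fd x = -(l * (a * h.q l x)) := fun x hx => if_pos hx
  have d2 : ∀ x, z ≤ x → fd x = l * (b * h'.q l (1 - x)) := fun x hx => by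
    rcases hx.eq_or_lt with hx | hx
    · rw [d1 x hx.ge, ← hx, ← e2]; ring
    · exact if_neg (not_le.2 hx)
  have hmap : MapsTo (fun x : ℝ => 1 - x) (Icc z 1) (Icc 0 (1 - z)) := fun x hx =>
    ⟨by linarith [hx.2], by linarith [hx.1]⟩
  refine ⟨f, fd, ?_, ?_, ?_, ?_, ?_, ?_⟩
  · refine glue_deriv hz (fun x hx => ?_) (fun x hx => ?_)
    · rw [d1 x hx.2]
      have := (h.u_deriv l hx).const_mul a
      refine (this.congr_deriv (by ring)).congr (fun y hy => f1 y hy.2) (f1 x hx.2)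
    · rw [d2 x hx.1]
      have := ((h'.u_deriv l (hmap hx)).comp x (hd_refl x _) hmap).const_mul b
      refine (this.congr_deriv (by ring)).congr (fun y hy => f2 y hy.1) (f2 x hx.1)
  · have c1 : ContinuousOn fd (Icc 0 z) :=
      (((h.q_contOn l).const_mul a).const_mul l).neg.congr fun x hx => d1 x hx.2
    have c2 : ContinuousOn fd (Icc z 1) := by
      have : ContinuousOn (fun x => h'.q l (1 - x)) (Icc z 1) :=
        (h'.q_contOn l).comp (by fun_prop) hmap
      exact ((this.const_mul b).const_mul l).congr fun x hx => d2 x hx.1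
    have := c1.union_of_isClosed c2 isClosed_Icc isClosed_Icc
    rwa [Icc_union_Icc_eq_Icc hz.1.le hz.2.le] at this
  · rw [d1 0 hz.1.le, h.q_zero]; ring
  · rw [d2 1 hz.2.le, sub_self, h'.q_zero]; ring
  · rcases hab with ha | hb
    · refine ⟨0, by simp, ?_⟩
      rw [f1 0 hz.1.le, h.u_zero]; simpa
    · refine ⟨1, by simp, ?_⟩
      rw [f2 1 hz.2.le, sub_self, h'.u_zero]; simpa
  · have L : ∀ x ≤ z, w x * fd x = -(l * a) * (w x * h.q l x) := fun x hx => by rw [d1 x hx]; ring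
    have R : ∀ x, z ≤ x → w x * fd x = (l * b) * ((fun y => w (1 - y) * h'.q l y) (1 - x)) :=
      fun x hx => by
        rw [d2 x hx]
        have : (1:ℝ) - (1 - x) = x := by ring
        simp only [this]; ring
    have e11 : ∀ x : ℝ, (1:ℝ) - (1 - x) = x := fun x => by ring
    intro x hx
    rcases lt_trichotomy x z with hxz | hxz | hxz
    · have := (h.wq_deriv (h.u_contOn l) ⟨hx.1, hxz⟩).const_mul (-(l * a))
      refine (this.congr_deriv ?_).congr_of_eventuallyEq ?_
      · rw [f1 x hxz.le]; ring
      · filter_upwards [Iio_mem_nhds hxz] with t ht using L t (mem_Iio.1 ht).le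
    · subst hxz
      have A := (h.wq_deriv_z (h.u_contOn l)).const_mul (-(l * a))
      have A' : HasDerivWithinAt (fun t => w t * fd t) (-(l * w x * f x)) (Iic x) x := by
        refine (A.congr_deriv ?_).congr (fun y hy => L y hy) (L x le_rfl)
        rw [f1 x le_rfl]; ring
      have B := ((h'.wq_deriv_z (h'.u_contOn l)).comp x (hd_refl x (Ici x))
        (fun y hy => by simp only [mem_Iic]; linarith [mem_Ici.1 hy])).const_mul (l * b)
      have B' : HasDerivWithinAt (fun t => w t * fd t) (-(l * w x * f x)) (Ici x) x := by
        refine (B.congr_deriv ?_).congr (fun y hy => R y hy) (R x le_rfl)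
        rw [f2 x le_rfl, e11]; ring
      have := A'.union B'
      rwa [Iic_union_Ici, hasDerivWithinAt_univ] at this
    · have B := ((h'.wq_deriv (h'.u_contOn l) (x := 1 - x) ⟨by linarith [hx.2], by linarith⟩).comp x
        ((hasDerivAt_id x).const_sub 1)).const_mul (l * b)
      refine (B.congr_deriv ?_).congr_of_eventuallyEq ?_
      · rw [f2 x hxz.le, e11]; ring
      · filter_upwards [Ioi_mem_nhds hxz] with t ht using R t (mem_Ioi.1 ht).le

lemma pos_of_ne {f : ℝ → ℝ} (hf : Continuous f) (h0 : 0 < f 0) {b : ℝ}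
    (hne : ∀ l ∈ Ico 0 b, f l ≠ 0) : ∀ l ∈ Ico 0 b, 0 < f l := by
  intro l hl
  by_contra hc
  push Not at hc
  obtain ⟨y, hy, hy0⟩ := intermediate_value_Icc' hl.1 hf.continuousOn ⟨hc, h0.le⟩
  exact hne y ⟨hy.1, hy.2.trans_lt hl.2⟩ hy0

lemma eigen_lt {w : ℝ → ℝ} {z K K' : ℝ} (hz : z ∈ Ioo (0:ℝ) 1) (h : LW w z K)
    (h' : LW (fun x => w (1 - x)) (1 - z) K') {l1 : ℝ} (hl1 : 0 < l1) (hq : h.q l1 z = 0) :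
    ∃ l, 0 < l ∧ l < l1 ∧ IsNeumannEigenvalue w l := by
  have cq := h.q_cont_l
  have cq' := h'.q_cont_l
  have cu := h.u_cont_l
  have cu' := h'.u_cont_l
  have hcomp : IsCompact (Icc 0 l1 ∩ {l | h.q l z * h'.q l (1 - z) = 0}) :=
    isCompact_Icc.inter_right (isClosed_eq (cq.mul cq') continuous_const)
  obtain ⟨s, ⟨⟨hs0, hs1⟩, hsq⟩, hmin⟩ := hcomp.exists_isLeast ⟨l1, ⟨hl1.le, le_rfl⟩, by simp [hq]⟩
  have hspos : 0 < s := by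
    rcases hs0.eq_or_lt with h0 | h0
    · exfalso
      rw [← h0] at hsq
      exact (mul_pos h.q_at0 h'.q_at0).ne' hsq
    · exact h0
  have hne : ∀ l ∈ Ico 0 s, h.q l z * h'.q l (1 - z) ≠ 0 := fun l hl hl0 =>
    absurd (hmin ⟨⟨hl.1, hl.2.le.trans hs1⟩, hl0⟩) (not_le.2 hl.2)
  have p1 := pos_of_ne cq h.q_at0 (fun l hl => left_ne_zero_of_mul (hne l hl))
  have p2 := pos_of_ne cq' h'.q_at0 (fun l hl => right_ne_zero_of_mul (hne l hl))
  have ev : ∀ᶠ l in 𝓝[<] s, l ∈ Ioo 0 s := Ioo_mem_nhdsLT hspos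
  have n1 : 0 ≤ h.q s z := ge_of_tendsto ((cq.tendsto s).mono_left nhdsWithin_le_nhds)
    (ev.mono fun l hl => (p1 l ⟨hl.1.le, hl.2⟩).le)
  have n2 : 0 ≤ h'.q s (1 - z) := ge_of_tendsto ((cq'.tendsto s).mono_left nhdsWithin_le_nhds)
    (ev.mono fun l hl => (p2 l ⟨hl.1.le, hl.2⟩).le)
  have u1 : h.q s z = 0 → h.u s z < 0 := fun h0 => h.u_neg h0 hspos fun l hl => p1 l ⟨hl.1.le, hl.2⟩
  have u2 : h'.q s (1 - z) = 0 → h'.u s (1 - z) < 0 := fun h0 =>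
    h'.u_neg h0 hspos fun l hl => p2 l ⟨hl.1.le, hl.2⟩
  let D : ℝ → ℝ := fun l => h.u l z * h'.q l (1 - z) + h.q l z * h'.u l (1 - z)
  have cD : Continuous D := (cu.mul cq').add (cq.mul cu')
  have D0 : 0 < D 0 := by
    simp only [D]
    rw [h.u_at0 ⟨h.hz.le, le_rfl⟩, h'.u_at0 ⟨h'.hz.le, le_rfl⟩]
    linarith [h.q_at0, h'.q_at0]
  obtain ⟨t, ht0, hts, htD⟩ : ∃ t, 0 < t ∧ t ≤ s ∧ D t < 0 := by
    rcases n1.eq_or_lt with a1 | a1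
    · rcases n2.eq_or_lt with a2 | a2
      · have b1 : ∀ᶠ l in 𝓝[<] s, h.u l z < 0 :=
          ((cu.tendsto s).eventually (Iio_mem_nhds (u1 a1.symm))).filter_mono nhdsWithin_le_nhds
        have b2 : ∀ᶠ l in 𝓝[<] s, h'.u l (1 - z) < 0 :=
          ((cu'.tendsto s).eventually (Iio_mem_nhds (u2 a2.symm))).filter_mono nhdsWithin_le_nhds
        obtain ⟨t, ht, c1, c2⟩ := (ev.and (b1.and b2)).exists
        refine ⟨t, ht.1, ht.2.le, ?_⟩
        have := mul_neg_of_neg_of_pos c1 (p2 t ⟨ht.1.le, ht.2⟩)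
        have := mul_neg_of_pos_of_neg (p1 t ⟨ht.1.le, ht.2⟩) c2
        simp only [D]; linarith
      · refine ⟨s, hspos, le_rfl, ?_⟩
        simp only [D]
        have := mul_neg_of_neg_of_pos (u1 a1.symm) a2
        rw [← a1]; linarith
    · have a2 : h'.q s (1 - z) = 0 := by
        rcases mul_eq_zero.1 hsq with h0 | h0
        · exact absurd h0 a1.ne'
        · exact h0
      refine ⟨s, hspos, le_rfl, ?_⟩
      simp only [D]
      have := mul_neg_of_pos_of_neg a1 (u2 a2)
      rw [a2]; linarith
  obtain ⟨l, hl, hl0⟩ := intermediate_value_Ioo' ht0.le cD.continuousOn ⟨htD, D0⟩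
  exact ⟨l, hl.1, hl.2.trans_le (hts.trans hs1), glue hz h h' hl0⟩

lemma fd_ne {m : ℕ} {w : ℝ → ℝ} (hw : Wt m w) {μ : ℝ} {φ φd : ℝ → ℝ} (hs : NeumannSol w μ φ φd)
    (hμ : 0 < μ) (hmin : ∀ μ', 0 < μ' → IsNeumannEigenvalue w μ' → μ ≤ μ') (h0 : 0 < φ 0)
    {z : ℝ} (hz : z ∈ Ioo (0:ℝ) 1) : φd z ≠ 0 := by
  intro hcon
  have h := hw.lw hz
  have h' := hw.refl'.lw (z := 1 - z) ⟨by linarith [hz.2], by linarith [hz.1]⟩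
  obtain ⟨s1, s2, s3, s4, s5, s6⟩ := hs
  have hsub : Icc 0 z ⊆ Icc (0:ℝ) 1 := Icc_subset_Icc_right hz.2.le
  have := h.uniq_sol (fun x hx => (s1 x (hsub hx)).mono hsub) (s2.mono hsub) s3
    (fun x hx => s6 x ⟨hx.1, hx.2.trans hz.2⟩)
  rw [hcon] at this
  have hq : h.q μ z = 0 := by
    have : μ * (φ 0 * h.q μ z) = 0 := by linarith
    simpa [hμ.ne', h0.ne'] using this
  obtain ⟨l, l0, l1, l2⟩ := eigen_lt hz h h' hμ hq
  exact absurd (hmin l l0 l2) (not_le.2 l1)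

lemma Ilow {m : ℕ} {w : ℝ → ℝ} (hw : Wt m w) {x c : ℝ} (hx : x ∈ Ioo (0:ℝ) 1) {f : ℝ → ℝ}
    (hf : ContinuousOn f (Icc 0 x)) (hc : 0 ≤ c) (hfc : ∀ s ∈ Icc 0 x, c ≤ f s) :
    c * x * w x / 2 ^ (m + 1) ≤ JJ w f x := by
  have h := hw.lw hx
  have hx0 := hx.1
  have i0 := h.int hf
  have i1 := h.int' hf (x := x / 2) ⟨by linarith, by linarith⟩
  have i2 : IntervalIntegrable (fun s => w s * f s) volume (x / 2) x := i1.symm.trans i0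
  unfold JJ
  rw [← intervalIntegral.integral_add_adjacent_intervals i1 i2]
  have p1 : 0 ≤ ∫ s in (0:ℝ)..(x/2), w s * f s := by
    refine intervalIntegral.integral_nonneg_of_ae_restrict (by linarith) ?_
    rw [Filter.EventuallyLE, ae_restrict_iff' measurableSet_Icc]
    have hz : ∀ᵐ s : ℝ, s ≠ 0 := by simp [ae_iff]
    filter_upwards [hz] with s hs0 hs
    have hs' : 0 < s := lt_of_le_of_ne hs.1 (Ne.symm hs0)
    exact mul_nonneg (h.pos s ⟨hs', by linarith [hs.2]⟩).le (hc.trans (hfc s ⟨hs.1, by linarith [hs.2]⟩))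
  have p2 : (∫ _s in (x/2)..x, w x / 2 ^ m * c) ≤ ∫ s in (x/2)..x, w s * f s := by
    refine intervalIntegral.integral_mono_on (by linarith) (by simp) i2 fun s hs => ?_
    have hs0 : 0 < s := by linarith [hs.1]
    have hwx := h.pos x ⟨hx0, le_rfl⟩
    have hws := h.pos s ⟨hs0, hs.2⟩
    have hB := hw.B s x hs0 hs.2 hx.2
    have : w x / 2 ^ m ≤ w s := by
      rw [div_le_iff₀ (by positivity)]
      have hs2 : x ≤ s * 2 := by linarith [hs.1]
      have h2 : w x * s ^ m ≤ w s * 2 ^ m * s ^ m := by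
        calc _ ≤ w s * x ^ m := hB
          _ ≤ w s * (s * 2) ^ m := by gcongr
          _ = _ := by rw [mul_pow]; ring
      exact le_of_mul_le_mul_right h2 (by positivity)
    exact mul_le_mul this (hfc s ⟨hs0.le, hs.2⟩) hc hws.le
  rw [intervalIntegral.integral_const, smul_eq_mul] at p2
  have e : (x - x / 2) * (w x / 2 ^ m * c) = c * x * w x / 2 ^ (m + 1) := by
    rw [pow_succ]; field_simp; ring
  linarith

/-- the small scale -/
def xz (m : ℕ) (C : ℝ) : ℝ := 1 / (2 + C * 2 ^ (m + 1))

lemma half {m : ℕ} {w : ℝ → ℝ} (hw : Wt m w) {μ c C : ℝ} {φ φd : ℝ → ℝ} (hs : NeumannSol w μ φ φd)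
    (hc : 0 < c) (hcμ : c ≤ μ) (hμC : μ ≤ C) (h0 : 0 < φ 0) (hanti : AntitoneOn φ (Icc 0 1)) :
    ((∫ x in (0:ℝ)..1, w x * φ x) = 0 → (xz m C) ^ (m + 1) / 2 ^ (m + 2) * φ 0 ≤ -φ 1) ∧
    ∀ x ∈ Ioo (0:ℝ) 1, 0 ≤ φ x → c * (xz m C) ^ (m + 1) / 2 ^ (m + 2) * x * φ 0 ≤ -φd x := by
  obtain ⟨s1, s2, s3, s4, -, s6⟩ := hs
  have hμ : 0 < μ := hc.trans_le hcμ
  have hC : 0 < C := hμ.trans_le hμC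
  have hx0p : 0 < xz m C := by unfold xz; positivity
  have hx0e : xz m C * (2 + C * 2 ^ (m + 1)) = 1 := by unfold xz; field_simp
  set x0 := xz m C with hx0d
  have hx0h : x0 ≤ 1 / 2 := by
    have : 0 ≤ x0 * (C * 2 ^ (m + 1)) := by positivity
    linarith
  have hx0C : C * 2 ^ m * x0 ≤ 1 / 2 := by
    rw [pow_succ] at hx0e
    nlinarith
  have hφc : ContinuousOn φ (Icc 0 1) := fun x hx => (s1 x hx).continuousWithinAt
  have hsub : ∀ z ∈ Ioo (0:ℝ) 1, Icc 0 z ⊆ Icc (0:ℝ) 1 := fun z hz => Icc_subset_Icc_right hz.2.le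
  have flux : ∀ x ∈ Ioo (0:ℝ) 1, w x * -φd x = μ * JJ w φ x := by
    intro x hx
    have h := hw.lw hx
    have := h.flux (hφc.mono (hsub x hx)) (s2.mono (hsub x hx)) s3
      (fun y hy => s6 y ⟨hy.1, hy.2.trans hx.2⟩) x ⟨hx.1.le, le_rfl⟩
    rw [this, ← h.wq φ ⟨hx.1, le_rfl⟩]
    ring
  -- upper bound
  have up : ∀ x ∈ Ioc (0:ℝ) (1/2), -φd x ≤ C * 2 ^ m * φ 0 := by
    intro x hx
    have hx1 : x ∈ Ioo (0:ℝ) 1 := ⟨hx.1, by linarith [hx.2]⟩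
    have hxp := hx.1
    have h := hw.lw (z := 1/2) (by norm_num)
    have hwx := hw.pos x hx1
    have h2 : JJ w φ x ≤ ∫ _s in (0:ℝ)..x, 2 ^ m * w x * φ 0 := by
      refine intervalIntegral.integral_mono_on_of_le_Ioo hx.1.le
        ((hw.lw hx1).int (hφc.mono (hsub x hx1))) (by simp) fun s hs => ?_
      have a1 := h.mono s x hs.1 hs.2.le hx.2
      have a2 : ((1 - 1/2 : ℝ) ^ m)⁻¹ = 2 ^ m := by
        rw [← inv_pow]; norm_num
      rw [a2] at a1
      have a3 := hw.pos s ⟨hs.1, hs.2.trans hx1.2⟩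
      have a4 : φ s ≤ φ 0 := hanti ⟨le_rfl, zero_le_one⟩ ⟨hs.1.le, (hs.2.trans hx1.2).le⟩ hs.1.le
      calc w s * φ s ≤ w s * φ 0 := by gcongr
        _ ≤ _ := by gcongr
    rw [intervalIntegral.integral_const, smul_eq_mul, sub_zero] at h2
    have h3 := flux x hx1
    have h4 : w x * -φd x ≤ w x * (C * 2 ^ m * φ 0) := by
      rw [h3]
      calc μ * JJ w φ x ≤ μ * (x * (2 ^ m * w x * φ 0)) := by gcongr
        _ ≤ C * (1 * (2 ^ m * w x * φ 0)) := by gcongr; exact hx1.2.le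
        _ = _ := by ring
    exact le_of_mul_le_mul_left h4 hwx
  have low : ∀ x ∈ Icc 0 x0, φ 0 / 2 ≤ φ x := by
    intro x hx
    rcases hx.1.eq_or_lt with hx' | hx'
    · rw [← hx']; linarith
    have hx1 : x < 1 := by linarith [hx.2]
    obtain ⟨y, hy, hye⟩ := exists_hasDerivAt_eq_slope φ φd hx' (hφc.mono (hsub x ⟨hx', hx1⟩))
      (fun y hy => (s1 y ⟨hy.1.le, by linarith [hy.2]⟩).hasDerivAt (Icc_mem_nhds hy.1 (hy.2.trans hx1)))
    have := up y ⟨hy.1, by linarith [hy.2, hx.2]⟩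
    rw [sub_zero, eq_div_iff hx'.ne'] at hye
    have h5 : -φd y * x ≤ C * 2 ^ m * φ 0 * x0 :=
      (mul_le_mul_of_nonneg_right this hx.1).trans (mul_le_mul_of_nonneg_left hx.2 (by positivity))
    have h6 : C * 2 ^ m * φ 0 * x0 ≤ φ 0 / 2 := by
      calc _ = C * 2 ^ m * x0 * φ 0 := by ring
        _ ≤ 1 / 2 * φ 0 := by gcongr
        _ = _ := by ring
    linarith
  have hx01 : x0 ∈ Ioo (0:ℝ) 1 := ⟨hx0p, by linarith⟩
  have hJ : ∀ x ∈ Ioc 0 x0, φ 0 / 2 * x * w x / 2 ^ (m + 1) ≤ JJ w φ x := fun x hx => by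
    have hx1 : x ∈ Ioo (0:ℝ) 1 := ⟨hx.1, hx.2.trans_lt hx01.2⟩
    exact Ilow hw hx1 (hφc.mono (hsub x hx1)) (by linarith) fun s hs => low s ⟨hs.1, hs.2.trans hx.2⟩
  have hwx0 := hw.pos x0 hx01
  have wB : ∀ s, x0 ≤ s → s < 1 → w s * x0 ^ m ≤ w x0 := by
    intro s h1 h2
    calc _ ≤ w x0 * s ^ m := hw.B x0 s hx0p h1 h2
      _ ≤ w x0 * 1 := by
        gcongr
        exact pow_le_one₀ (by linarith) h2.le
      _ = _ := mul_one _
  have hpw : 0 < x0 ^ m := by positivity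
  have ii0 := (hw.lw hx01).int (hφc.mono (hsub x0 hx01))
  constructor
  · intro hint
    have ii1 : IntervalIntegrable (fun s => w s * φ s) volume x0 1 := by
      rw [intervalIntegrable_iff_integrableOn_Ioo_of_le hx01.2.le]
      obtain ⟨M, hM⟩ := isCompact_Icc.exists_bound_of_continuousOn hφc
      refine Integrable.of_bound (μ := volume.restrict (Ioo x0 1)) ?_ (w x0 / x0 ^ m * M) ?_
      · have hcont : ContinuousOn (fun s => w s * φ s) (Ioo x0 1) :=
          (hw.cont.mono (Ioo_subset_Ioo_left hx0p.le)).mul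
            (hφc.mono fun s hs => ⟨hx0p.le.trans hs.1.le, hs.2.le⟩)
        exact hcont.aestronglyMeasurable measurableSet_Ioo
      · rw [ae_restrict_iff' measurableSet_Ioo]
        refine Eventually.of_forall fun s hs => ?_
        have hws := hw.pos s ⟨hx0p.trans hs.1, hs.2⟩
        rw [norm_mul, Real.norm_eq_abs, abs_of_pos hws]
        refine mul_le_mul ?_ (hM s ⟨hx0p.le.trans hs.1.le, hs.2.le⟩) (norm_nonneg _) (by positivity)
        rw [le_div_iff₀ hpw]
        exact wB s hs.1.le hs.2
    rw [← intervalIntegral.integral_add_adjacent_intervals ii0 ii1] at hint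
    have j0 := hJ x0 ⟨hx0p, le_rfl⟩
    unfold JJ at j0
    have j0p : 0 < φ 0 / 2 * x0 * w x0 / 2 ^ (m + 1) := by positivity
    have ge1 : ∀ s ∈ Ioo x0 1, φ 1 ≤ φ s := fun s hs =>
      hanti ⟨hx0p.le.trans hs.1.le, hs.2.le⟩ ⟨zero_le_one, le_rfl⟩ hs.2.le
    have neg1 : φ 1 < 0 := by
      by_contra hcon
      push Not at hcon
      have : (∫ _s in x0..1, (0:ℝ)) ≤ ∫ s in x0..1, w s * φ s := by
        refine intervalIntegral.integral_mono_on_of_le_Ioo hx01.2.le (by simp) ii1 fun s hs => ?_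
        exact mul_nonneg (hw.pos s ⟨hx0p.trans hs.1, hs.2⟩).le (hcon.trans (ge1 s hs))
      simp only [intervalIntegral.integral_zero] at this
      linarith
    have j1 : (∫ _s in x0..1, w x0 / x0 ^ m * φ 1) ≤ ∫ s in x0..1, w s * φ s := by
      refine intervalIntegral.integral_mono_on_of_le_Ioo hx01.2.le (by simp) ii1 fun s hs => ?_
      have hws := hw.pos s ⟨hx0p.trans hs.1, hs.2⟩
      have a1 : w s ≤ w x0 / x0 ^ m := by
        rw [le_div_iff₀ hpw]; exact wB s hs.1.le hs.2
      calc w x0 / x0 ^ m * φ 1 ≤ w s * φ 1 := mul_le_mul_of_nonpos_right a1 neg1.le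
        _ ≤ w s * φ s := mul_le_mul_of_nonneg_left (ge1 s hs) hws.le
    rw [intervalIntegral.integral_const, smul_eq_mul] at j1
    have j2 : w x0 / x0 ^ m * φ 1 ≤ (1 - x0) * (w x0 / x0 ^ m * φ 1) := by
      have : w x0 / x0 ^ m * φ 1 ≤ 0 := mul_nonpos_of_nonneg_of_nonpos (by positivity) neg1.le
      nlinarith
    have j3 : φ 0 / 2 * x0 * w x0 / 2 ^ (m + 1) ≤ -(w x0 / x0 ^ m * φ 1) := by linarith
    have j4 : w x0 / x0 ^ m * (x0 ^ (m + 1) / 2 ^ (m + 2) * φ 0) ≤ w x0 / x0 ^ m * (-φ 1) := by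
      have e : w x0 / x0 ^ m * (x0 ^ (m + 1) / 2 ^ (m + 2) * φ 0) = φ 0 / 2 * x0 * w x0 / 2 ^ (m + 1) := by
        rw [pow_succ x0, pow_succ 2 (m + 1)]
        field_simp
      rw [e]; linarith
    exact le_of_mul_le_mul_left j4 (by positivity)
  · intro x hx hxφ
    have hwx := hw.pos x hx
    have hxp := hx.1
    have hx0p1 : x0 ^ (m + 1) ≤ 1 := pow_le_one₀ hx0p.le (by linarith)
    refine le_of_mul_le_mul_left ?_ hwx
    rw [flux x hx]
    rcases le_total x x0 with hxx | hxx
    · have := hJ x ⟨hx.1, hxx⟩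
      calc w x * (c * x0 ^ (m + 1) / 2 ^ (m + 2) * x * φ 0)
          ≤ w x * (μ * 1 / 2 ^ (m + 2) * x * φ 0) := by gcongr
        _ = μ * (φ 0 / 2 * x * w x / 2 ^ (m + 1)) := by
          rw [pow_succ 2 (m + 1)]; field_simp
        _ ≤ _ := by gcongr
    · have j0 := hJ x0 ⟨hx0p, le_rfl⟩
      have ii : IntervalIntegrable (fun s => w s * φ s) volume 0 x :=
        (hw.lw hx).int (hφc.mono (hsub x hx))
      have j1 : JJ w φ x0 ≤ JJ w φ x := by
        unfold JJ
        rw [← intervalIntegral.integral_add_adjacent_intervals ii0 (ii0.symm.trans ii)]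
        have : 0 ≤ ∫ s in x0..x, w s * φ s := by
          refine intervalIntegral.integral_nonneg hxx fun s hs => ?_
          have hs1 : s < 1 := hs.2.trans_lt hx.2
          have hs0 : 0 < s := hx0p.trans_le hs.1
          exact mul_nonneg (hw.pos s ⟨hs0, hs1⟩).le
            (hxφ.trans (hanti ⟨hs0.le, hs1.le⟩ ⟨hx.1.le, hx.2.le⟩ hs.2))
        linarith
      have b := wB x hxx hx.2
      calc w x * (c * x0 ^ (m + 1) / 2 ^ (m + 2) * x * φ 0)
          ≤ w x * (μ * x0 ^ (m + 1) / 2 ^ (m + 2) * 1 * φ 0) := by gcongr; exact hx.2.le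
        _ = μ * (φ 0 / 2 * x0 * (w x * x0 ^ m) / 2 ^ (m + 1)) := by
          rw [pow_succ 2 (m + 1), pow_succ x0]; field_simp
        _ ≤ μ * (φ 0 / 2 * x0 * w x0 / 2 ^ (m + 1)) := by gcongr
        _ ≤ _ := by gcongr; exact j0.trans j1

lemma fd_neg {m : ℕ} {w : ℝ → ℝ} (hw : Wt m w) {μ : ℝ} {φ φd : ℝ → ℝ} (hs : NeumannSol w μ φ φd)
    (hμ : 0 < μ) (hmin : ∀ μ', 0 < μ' → IsNeumannEigenvalue w μ' → μ ≤ μ') (h0 : 0 < φ 0)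
    {x : ℝ} (hx : x ∈ Ioo (0:ℝ) 1) : φd x < 0 := by
  have hne := fun z hz => fd_ne hw hs hμ hmin h0 (z := z) hz
  obtain ⟨s1, s2, s3, s4, -, s6⟩ := hs
  have hφc : ContinuousOn φ (Icc 0 1) := fun x hx => (s1 x hx).continuousWithinAt
  have hev : ∀ᶠ x in 𝓝[Icc (0:ℝ) 1] 0, 0 < φ x :=
    (hφc 0 ⟨le_rfl, zero_le_one⟩).eventually (Ioi_mem_nhds h0)
  rw [Metric.nhdsWithin_basis_ball.eventually_iff] at hev
  obtain ⟨e, he, hev⟩ := hev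
  set d := min (e / 2) x with hd
  have hd0 : 0 < d := lt_min (by linarith) hx.1
  have hdx : d ≤ x := min_le_right _ _
  have hde : d ≤ e / 2 := min_le_left _ _
  have hd1 : d ∈ Ioo (0:ℝ) 1 := ⟨hd0, hdx.trans_lt hx.2⟩
  have hsub : Icc 0 d ⊆ Icc (0:ℝ) 1 := Icc_subset_Icc_right hd1.2.le
  have h := hw.lw hd1
  have hfl := h.flux (hφc.mono hsub) (s2.mono hsub) s3
      (fun y hy => s6 y ⟨hy.1, hy.2.trans hd1.2⟩) d ⟨hd0.le, le_rfl⟩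
  have hq := h.q_pos (hφc.mono hsub) (fun s hs => (hev ⟨by
    rw [Metric.mem_ball, Real.dist_eq, sub_zero, abs_of_nonneg hs.1]; linarith [hs.2], hsub hs⟩).le) h0
  have hdn : φd d < 0 := by
    rw [hfl]; have := mul_pos hμ hq; linarith
  by_contra hcon
  push Not at hcon
  obtain ⟨y, hy, hy0⟩ := intermediate_value_Icc hdx
    (s2.mono (Icc_subset_Icc hd0.le hx.2.le)) ⟨hdn.le, hcon⟩
  exact hne y ⟨hd0.trans_le hy.1, hy.2.trans_lt hx.2⟩ hy0

lemma sol_refl {w : ℝ → ℝ} {μ : ℝ} {φ φd : ℝ → ℝ} (hs : NeumannSol w μ φ φd) :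
    NeumannSol (fun x => w (1 - x)) μ (fun x => -φ (1 - x)) (fun x => φd (1 - x)) := by
  obtain ⟨s1, s2, s3, s4, ⟨y, hy, hy0⟩, s6⟩ := hs
  have hmap : MapsTo (fun x : ℝ => 1 - x) (Icc 0 1) (Icc 0 1) := fun x hx =>
    ⟨by linarith [hx.2], by linarith [hx.1]⟩
  refine ⟨fun x hx => ?_, s2.comp (by fun_prop) hmap, by simpa using s4, by simpa using s3,
    ⟨1 - y, hmap hy, by simpa using hy0⟩, fun x hx => ?_⟩
  · have := ((s1 (1 - x) (hmap hx)).comp x (hd_refl x _) hmap).neg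
    exact this.congr_deriv (by ring)
  · have := (s6 (1 - x) ⟨by linarith [hx.2], by linarith [hx.1]⟩).comp x ((hasDerivAt_id x).const_sub 1)
    exact this.congr_deriv (by ring)

/-- `c φ(0) ≤ -φ(1) ≤ C φ(0)`, and the reverse gradient estimate
`-φ'(x) ≥ c_δ φ(0)` for `δ ≤ x ≤ 1 - δ`. -/
theorem ode_eigenfunction_reverse_gradient
    (m : ℕ) (hm : 1 ≤ m) (cμ Cμ : ℝ) (hcμ : 0 < cμ) (hCμ : cμ ≤ Cμ) :
    ∃ c' > (0:ℝ), ∃ C' > (0:ℝ), ∀ δ : ℝ, 0 < δ → δ < 1/2 → ∃ cδ > (0:ℝ),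
    ∀ (Ω : Set (EuclideanSpace ℝ (Fin (m+1)))) (φ φd : ℝ → ℝ) (μ : ℝ),
      IsOpen Ω → Convex ℝ Ω → Bornology.IsBounded Ω →
      -- Ω ⊆ (0,1) × ℝ^{n-1}
      (∀ x y, mkPt m x y ∈ Ω → x ∈ Ioo (0:ℝ) 1) →
      -- nonempty cross-sections
      (∀ s ∈ Ioo (0:ℝ) 1, (cross Ω s).Nonempty) →
      -- φ is a first Neumann eigenfunction of -(ωφ')' = μωφ, with φ(0) > 0
      NeumannSol (ωvol Ω) μ φ φd →
      0 < μ →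
      (∀ μ', 0 < μ' → IsNeumannEigenvalue (ωvol Ω) μ' → μ ≤ μ') →
      (∫ x in (0:ℝ)..1, ωvol Ω x * φ x) = 0 →
      0 < φ 0 →
      -- uniform bounds on μ, assumed as hypotheses
      cμ ≤ μ → μ ≤ Cμ →
      (c' * φ 0 ≤ -φ 1 ∧ -φ 1 ≤ C' * φ 0) ∧
      (∀ x ∈ Icc δ (1 - δ), cδ * φ 0 ≤ -φd x) := by
  have hC0 : 0 < Cμ := hcμ.trans_le hCμ
  have hx0 : 0 < xz m Cμ := by unfold xz; positivity
  have hcp : 0 < (xz m Cμ) ^ (m + 1) / 2 ^ (m + 2) := by positivity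
  have hc2p : 0 < cμ * (xz m Cμ) ^ (m + 1) / 2 ^ (m + 2) := by positivity
  set c1 := (xz m Cμ) ^ (m + 1) / 2 ^ (m + 2) with hc1
  set c2 := cμ * (xz m Cμ) ^ (m + 1) / 2 ^ (m + 2) with hc2
  refine ⟨c1, hcp, c1⁻¹, by positivity, fun δ hδ hδ2 => ⟨c2 * δ * min 1 c1, by positivity, ?_⟩⟩
  intro Ω φ φd μ ho hc hb _ hne hs hμ hmin hint h0 h1 h2
  have hw := wt_ωvol ho hc hb hne
  have hneg := fun x hx => fd_neg hw hs hμ hmin h0 (x := x) hx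
  have hanti : AntitoneOn φ (Icc 0 1) := by
    have hd : ∀ x ∈ interior (Icc (0:ℝ) 1), HasDerivAt φ (φd x) x := fun x hx => by
      rw [interior_Icc] at hx
      exact (hs.1 x (Ioo_subset_Icc_self hx)).hasDerivAt (Icc_mem_nhds hx.1 hx.2)
    refine antitoneOn_of_deriv_nonpos (convex_Icc 0 1) (fun x hx => (hs.1 x hx).continuousWithinAt)
      (fun x hx => (hd x hx).differentiableAt.differentiableWithinAt) (fun x hx => ?_)
    rw [(hd x hx).deriv]
    rw [interior_Icc] at hx
    exact (hneg x hx).le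
  obtain ⟨A1, A2⟩ := half hw hs hcμ h1 h2 h0 hanti
  have A1 := A1 hint
  rw [← hc1] at A1
  rw [← hc2] at A2
  have h1neg : 0 < -φ 1 := lt_of_lt_of_le (by positivity) A1
  have hanti' : AntitoneOn (fun x => -φ (1 - x)) (Icc 0 1) := by
    intro x hx y hy hxy
    exact neg_le_neg (hanti ⟨by linarith [hy.2], by linarith [hy.1]⟩ ⟨by linarith [hx.2], by linarith [hx.1]⟩
      (by linarith))
  obtain ⟨B1, B2⟩ := half hw.refl' (sol_refl hs) hcμ h1 h2 (by simpa using h1neg) hanti'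
  have hint' : (∫ x in (0:ℝ)..1, ωvol Ω (1 - x) * -φ (1 - x)) = 0 := by
    have := intervalIntegral.integral_comp_sub_left (a := 0) (b := 1) (fun x => ωvol Ω x * -φ x) 1
    rw [this]
    simp only [sub_self, sub_zero, mul_neg, intervalIntegral.integral_neg, hint, neg_zero]
  have B1 := B1 hint'
  rw [← hc1] at B1
  rw [← hc2] at B2
  simp only [sub_self, sub_zero, neg_neg] at B1 B2
  refine ⟨⟨A1, ?_⟩, fun x hx => ?_⟩
  · rw [inv_mul_eq_div, le_div_iff₀ hcp]; linarith
  · have hx01 : x ∈ Ioo (0:ℝ) 1 := ⟨by linarith [hx.1], by linarith [hx.2]⟩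
    rcases le_total 0 (φ x) with hp | hp
    · refine le_trans ?_ (A2 x hx01 hp)
      have := hx.1
      calc c2 * δ * min 1 c1 * φ 0 ≤ c2 * x * 1 * φ 0 := by
            have hxp := hx01.1
            have hmin1 : min 1 c1 ≤ 1 := min_le_left _ _
            exact mul_le_mul_of_nonneg_right (mul_le_mul (mul_le_mul_of_nonneg_left this hc2p.le)
              hmin1 (by positivity) (mul_nonneg hc2p.le hxp.le)) h0.le
        _ = _ := by ring
    · have hB := B2 (1 - x) ⟨by linarith [hx01.2], by linarith [hx01.1]⟩ (by
        rw [sub_sub_cancel]; linarith)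
      rw [sub_sub_cancel] at hB
      refine le_trans ?_ hB
      have hδx : δ ≤ 1 - x := by linarith [hx.2]
      calc c2 * δ * min 1 c1 * φ 0 ≤ c2 * δ * c1 * φ 0 := by
            gcongr
            exact min_le_right _ _
        _ = c2 * δ * (c1 * φ 0) := by ring
        _ ≤ c2 * (1 - x) * (-φ 1) :=
          mul_le_mul (mul_le_mul_of_nonneg_left hδx hc2p.le) A1 (by positivity)
            (mul_nonneg hc2p.le (hδ.le.trans hδx))
end
end

section
/- Let ω and φ be as in the context, and let 0 < ε < 1/2 be smaller than a constant depending only on n. If either x₁, x₂ ∈ [0, ε] or x₁, x₂ ∈ [1−ε, 1], then |φ(x₁) − φ(x₂)| ≤ C ε² φ(0), with C depending only on n. -/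
open MeasureTheory Set Filter Topology RealInnerProductSpace

noncomputable section

structure GoodSol (m : ℕ) (ω : ℝ → ℝ) (μ : ℝ) (φ φd : ℝ → ℝ) : Prop where
  der : ∀ x ∈ Icc (0:ℝ) 1, HasDerivWithinAt φ (φd x) (Icc 0 1) x
  cont : ContinuousOn φd (Icc 0 1)
  zero : φd 0 = 0
  ode : ∀ x ∈ Ioo (0:ℝ) 1, HasDerivAt (fun t => ω t * φd t) (-(μ * ω x * φ x)) x
  pos : ∀ x ∈ Ioo (0:ℝ) 1, 0 < ω x
  grow : ∀ t x : ℝ, 0 < t → t ≤ x → x < 1 → (1 - x) ^ m * ω t ≤ ω x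
  mupos : 0 < μ

theorem GoodSol.dbound {m : ℕ} {ω : ℝ → ℝ} {μ : ℝ} {φ φd : ℝ → ℝ} (h : GoodSol m ω μ φ φd)
    {x M : ℝ} (hx0 : 0 < x) (hx1 : x < 1) (hM : ∀ t ∈ Icc (0:ℝ) x, |φ t| ≤ M) :
    (1 - x) ^ m * |φd x| ≤ μ * x * M := by
  have hM0 : 0 ≤ M := (abs_nonneg _).trans (hM 0 ⟨le_rfl, hx0.le⟩)
  have hp : 0 < (1 - x) ^ m := pow_pos (by linarith) m
  have hwx := h.pos x ⟨hx0, hx1⟩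
  have hmu := h.mupos
  set W := ω x / (1 - x) ^ m with hW
  have hW0 : 0 < W := div_pos hwx hp
  have hWt : ∀ t, 0 < t → t ≤ x → ω t ≤ W := by
    intro t ht htx
    rw [hW, le_div_iff₀ hp, mul_comm]
    exact h.grow t x ht htx hx1
  have key : ∀ a ∈ Ioo (0:ℝ) x, ω x * |φd x| ≤ μ * W * M * x + W * |φd a| := by
    intro a ha
    have := (convex_Icc a x).norm_image_sub_le_of_norm_hasDerivWithin_le
      (f := fun t => ω t * φd t) (f' := fun t => -(μ * ω t * φ t)) (C := μ * W * M)
      (fun t ht => (h.ode t ⟨ha.1.trans_le ht.1, ht.2.trans_lt hx1⟩).hasDerivWithinAt)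
      (fun t ht => by
        have ht0 : 0 < t := ha.1.trans_le ht.1
        have h1 := hWt t ht0 ht.2
        have h2 := hM t ⟨ht0.le, ht.2⟩
        have h3 := h.pos t ⟨ht0, ht.2.trans_lt hx1⟩
        rw [Real.norm_eq_abs, abs_neg, abs_mul, abs_of_pos (mul_pos hmu h3)]
        gcongr)
      (left_mem_Icc.2 ha.2.le) (right_mem_Icc.2 ha.2.le)
    simp only [Real.norm_eq_abs] at this
    rw [abs_of_pos (sub_pos.2 ha.2)] at this
    have h4 := abs_sub_abs_le_abs_sub (ω x * φd x) (ω a * φd a)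
    rw [abs_mul, abs_mul, abs_of_pos hwx, abs_of_pos (h.pos a ⟨ha.1, ha.2.trans hx1⟩)] at h4
    have h5 : ω a * |φd a| ≤ W * |φd a| :=
      mul_le_mul_of_nonneg_right (hWt a ha.1 ha.2.le) (abs_nonneg _)
    have h6 : μ * W * M * (x - a) ≤ μ * W * M * x :=
      mul_le_mul_of_nonneg_left (by linarith [ha.1]) (by positivity)
    linarith
  have lim : Tendsto (fun a => μ * W * M * x + W * |φd a|) (𝓝[>] 0) (𝓝 (μ * W * M * x + W * |φd 0|)) := by
    have c : Tendsto φd (𝓝[>] 0) (𝓝 (φd 0)) := by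
      have := h.cont 0 ⟨le_rfl, zero_le_one⟩
      refine (this.mono_left ?_ : Tendsto φd (𝓝[Ioo 0 1] 0) _).mono_left ?_
      · exact nhdsWithin_mono _ Ioo_subset_Icc_self
      · rw [nhdsWithin_Ioo_eq_nhdsGT zero_lt_one]
    exact (c.abs.const_mul W).const_add _
  have fin : ω x * |φd x| ≤ μ * W * M * x + W * |φd 0| := by
    refine ge_of_tendsto lim ?_
    filter_upwards [Ioo_mem_nhdsGT hx0] with a ha using key a ha
  rw [h.zero, abs_zero, mul_zero, add_zero] at fin
  have e : ω x = W * (1 - x) ^ m := by rw [hW]; field_simp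
  rw [e] at fin
  refine le_of_mul_le_mul_left ?_ hW0
  linarith

theorem GoodSol.dbound' {m : ℕ} {ω : ℝ → ℝ} {μ : ℝ} {φ φd : ℝ → ℝ} (h : GoodSol m ω μ φ φd)
    {x b K M : ℝ} (hb : b < 1) (hK : μ ≤ K * (1 - b) ^ m)
    (hx0 : 0 ≤ x) (hx1 : x ≤ b) (hM : ∀ t ∈ Icc (0:ℝ) x, |φ t| ≤ M) :
    |φd x| ≤ K * x * M := by
  rcases hx0.eq_or_lt with rfl | hx0
  · simp [h.zero]
  have hM0 : 0 ≤ M := (abs_nonneg _).trans (hM 0 ⟨le_rfl, hx0.le⟩)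
  have hp : 0 < (1 - b) ^ m := pow_pos (by linarith) m
  have h1 := h.dbound hx0 (hx1.trans_lt hb) hM
  have h2 : (1 - b) ^ m * |φd x| ≤ (1 - x) ^ m * |φd x| := by
    gcongr
  have h3 : μ * x * M ≤ K * (1 - b) ^ m * x * M := by gcongr
  refine le_of_mul_le_mul_left ?_ hp
  linarith

theorem GoodSol.contφ {m : ℕ} {ω : ℝ → ℝ} {μ : ℝ} {φ φd : ℝ → ℝ} (h : GoodSol m ω μ φ φd) :
    ContinuousOn φ (Icc 0 1) := fun x hx => (h.der x hx).continuousWithinAt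

theorem GoodSol.sup {m : ℕ} {ω : ℝ → ℝ} {μ : ℝ} {φ φd : ℝ → ℝ} (h : GoodSol m ω μ φ φd)
    {b K : ℝ} (hb0 : 0 ≤ b) (hb : b < 1) (hK0 : 0 < K) (hK : μ ≤ K * (1 - b) ^ m) :
    ∀ x ∈ Icc (0:ℝ) b, |φ x| ≤ 2 * Real.exp (2 * K) * |φ 0| := by
  have hsub : Icc (0:ℝ) b ⊆ Icc 0 1 := Icc_subset_Icc_right hb.le
  have hc : ContinuousOn (fun x => |φ x| * Real.exp (-(2 * K * x))) (Icc 0 b) :=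
    (h.contφ.mono hsub).abs.mul (by fun_prop)
  obtain ⟨y, hy, hmax⟩ := isCompact_Icc.exists_isMaxOn (nonempty_Icc.2 hb0) hc
  set N := |φ y| * Real.exp (-(2 * K * y)) with hN
  have hN0 : 0 ≤ N := by positivity
  have hle : ∀ x ∈ Icc (0:ℝ) b, |φ x| ≤ N * Real.exp (2 * K * x) := by
    intro x hx
    have h1 : |φ x| * Real.exp (-(2 * K * x)) ≤ N := hmax hx
    rw [Real.exp_neg, ← div_eq_mul_inv, div_le_iff₀ (Real.exp_pos _)] at h1
    exact h1
  have hB := image_norm_le_of_norm_deriv_right_le_deriv_boundary (f := φ) (f' := φd) (a := 0) (b := b)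
    (B := fun s => |φ 0| + N / 2 * Real.exp (2 * K * s))
    (B' := fun s => N / 2 * (Real.exp (2 * K * s) * (2 * K)))
    (h.contφ.mono hsub)
    (fun x hx => by
      have hx1 : x < 1 := hx.2.trans hb
      exact (h.der x ⟨hx.1, hx1.le⟩).mono_of_mem_nhdsWithin
        (mem_of_superset (Icc_mem_nhdsGE hx1) (Icc_subset_Icc_left hx.1)))
    (by simp; positivity)
    (fun x => by
      have : HasDerivAt (fun s : ℝ => 2 * K * s) (2 * K) x := by
        simpa using (hasDerivAt_id x).const_mul (2 * K)
      exact (this.exp.const_mul (N / 2)).const_add _)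
    (fun x hx => by
      have h1 := h.dbound' (M := N * Real.exp (2 * K * x)) hb hK hx.1 hx.2.le (fun t ht =>
        (hle t ⟨ht.1, ht.2.trans hx.2.le⟩).trans (by gcongr; exact ht.2))
      rw [Real.norm_eq_abs]
      have h2 : K * x * (N * Real.exp (2 * K * x)) ≤ K * 1 * (N * Real.exp (2 * K * x)) := by
        gcongr
        linarith [hx.2]
      linarith)
  have hy' := hB hy
  rw [Real.norm_eq_abs] at hy'
  have e1 : |φ y| = N * Real.exp (2 * K * y) := by
    rw [hN, mul_assoc, ← Real.exp_add]; simp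
  have e2 : 1 ≤ Real.exp (2 * K * y) := Real.one_le_exp (by have := hy.1; positivity)
  have hN2 : N ≤ 2 * |φ 0| := by
    have : N * 1 ≤ N * Real.exp (2 * K * y) := by gcongr
    linarith
  intro x hx
  calc |φ x| ≤ N * Real.exp (2 * K * x) := hle x hx
    _ ≤ 2 * |φ 0| * Real.exp (2 * K * 1) := by
      gcongr
      linarith [hx.2]
    _ = _ := by rw [mul_one]; ring

theorem GoodSol.flat {m : ℕ} {ω : ℝ → ℝ} {μ : ℝ} {φ φd : ℝ → ℝ} (h : GoodSol m ω μ φ φd)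
    {b K : ℝ} (hb : b < 1) (hK0 : 0 < K) (hK : μ ≤ K * (1 - b) ^ m)
    {ε x y : ℝ} (he : ε ≤ b) (hx : x ∈ Icc 0 ε) (hy : y ∈ Icc 0 ε) :
    |φ x - φ y| ≤ K * (2 * Real.exp (2 * K)) * ε ^ 2 * |φ 0| := by
  have he0 : 0 ≤ ε := hx.1.trans hx.2
  have hs := h.sup (he0.trans he) hb hK0 hK
  have := (convex_Icc 0 ε).norm_image_sub_le_of_norm_hasDerivWithin_le
      (f := φ) (f' := φd) (C := K * ε * (2 * Real.exp (2 * K) * |φ 0|))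
      (fun t ht => (h.der t ⟨ht.1, by linarith [ht.2]⟩).mono (Icc_subset_Icc_right (by linarith)))
      (fun t ht => by
        refine (h.dbound' hb hK ht.1 (ht.2.trans he) (fun s hs' => hs s ⟨hs'.1, by linarith [hs'.2, ht.2]⟩)).trans ?_
        gcongr
        exact ht.2)
      hy hx
  simp only [Real.norm_eq_abs] at this
  have h2 : |x - y| ≤ ε := by rw [abs_le]; constructor <;> linarith [hx.1, hx.2, hy.1, hy.2]
  calc _ ≤ _ := this
    _ ≤ K * ε * (2 * Real.exp (2 * K) * |φ 0|) * ε := by gcongr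
    _ = _ := by ring

theorem cross_homothety {m : ℕ} {Ω : Set (EuclideanSpace ℝ (Fin (m+1)))} (hc : Convex ℝ Ω)
    {t s l x : ℝ} {z : EuclideanSpace ℝ (Fin m)} (hz : z ∈ cross Ω s) (hl0 : 0 ≤ l) (hl1 : l ≤ 1)
    (hx : l * t + (1 - l) * s = x) :
    AffineMap.homothety z l '' cross Ω t ⊆ cross Ω x := by
  rintro _ ⟨y, hy, rfl⟩
  have := hc hy hz hl0 (sub_nonneg.2 hl1) (by ring)
  show mkPt m x _ ∈ Ω
  convert this using 1
  ext i
  refine Fin.cases ?_ (fun j => ?_) i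
  · simp [mkPt, ← hx]
  · simp [mkPt, AffineMap.homothety_apply]
    ring

theorem mkPt_continuous (m : ℕ) (s : ℝ) : Continuous (mkPt m s) := by
  unfold mkPt
  refine (ContinuousLinearEquiv.continuous _).comp ?_
  exact continuous_const.finCons (ContinuousLinearEquiv.continuous _)

theorem cross_bdd {m : ℕ} {Ω : Set (EuclideanSpace ℝ (Fin (m+1)))} (hb : Bornology.IsBounded Ω)
    (s : ℝ) : Bornology.IsBounded (cross Ω s) := by
  obtain ⟨R, hR⟩ := hb.exists_norm_le
  refine isBounded_iff_forall_norm_le.2 ⟨R, fun y hy => (?_ : _ ≤ _).trans (hR _ hy)⟩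
  rw [EuclideanSpace.norm_eq, EuclideanSpace.norm_eq]
  apply Real.sqrt_le_sqrt
  rw [Fin.sum_univ_succ]
  simp [mkPt]
  positivity

theorem ωvol_grow {m : ℕ} {Ω : Set (EuclideanSpace ℝ (Fin (m+1)))} (hc : Convex ℝ Ω)
    (hb : Bornology.IsBounded Ω)
    {t s l x : ℝ} (hz : (cross Ω s).Nonempty) (hl0 : 0 ≤ l) (hl1 : l ≤ 1)
    (hx : l * t + (1 - l) * s = x) : l ^ m * ωvol Ω t ≤ ωvol Ω x := by
  obtain ⟨z, hz⟩ := hz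
  have h1 := measure_mono (μ := volume) (cross_homothety hc hz hl0 hl1 hx)
  rw [Measure.addHaar_image_homothety] at h1
  have h2 := ENNReal.toReal_mono (cross_bdd hb x).measure_lt_top.ne h1
  rw [ENNReal.toReal_mul, ENNReal.toReal_ofReal (abs_nonneg _), abs_of_nonneg (by positivity)] at h2
  simpa [ωvol] using h2

theorem ωvol_pos {m : ℕ} {Ω : Set (EuclideanSpace ℝ (Fin (m+1)))} (ho : IsOpen Ω)
    (hb : Bornology.IsBounded Ω) {s : ℝ} (hz : (cross Ω s).Nonempty) : 0 < ωvol Ω s :=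
  ENNReal.toReal_pos ((ho.preimage (mkPt_continuous m s)).measure_pos volume hz).ne'
    (cross_bdd hb s).measure_lt_top.ne

/-- `φ` varies by at most `C ε² φ(0)` on each of the end intervals
`[0, ε]` and `[1-ε, 1]`. -/
theorem ode_eigenfunction_flat_at_ends
    (m : ℕ) (hm : 1 ≤ m) (cμ Cμ : ℝ) (hcμ : 0 < cμ) (hCμ : cμ ≤ Cμ) :
    ∃ C > (0:ℝ), ∃ ε₀ > (0:ℝ), ∀ ε : ℝ, 0 < ε → ε < 1/2 → ε < ε₀ →
    ∀ (Ω : Set (EuclideanSpace ℝ (Fin (m+1)))) (φ φd : ℝ → ℝ) (μ : ℝ),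
      IsOpen Ω → Convex ℝ Ω → Bornology.IsBounded Ω →
      -- Ω ⊆ (0,1) × ℝ^{n-1}
      (∀ x y, mkPt m x y ∈ Ω → x ∈ Ioo (0:ℝ) 1) →
      -- nonempty cross-sections
      (∀ s ∈ Ioo (0:ℝ) 1, (cross Ω s).Nonempty) →
      -- φ is a first Neumann eigenfunction of -(ωφ')' = μωφ, with φ(0) > 0
      NeumannSol (ωvol Ω) μ φ φd →
      0 < μ →
      (∀ μ', 0 < μ' → IsNeumannEigenvalue (ωvol Ω) μ' → μ ≤ μ') →
      (∫ x in (0:ℝ)..1, ωvol Ω x * φ x) = 0 →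
      0 < φ 0 →
      -- uniform bounds on μ, assumed as hypotheses
      cμ ≤ μ → μ ≤ Cμ →
      ∀ x₁ x₂ : ℝ,
        ((x₁ ∈ Icc (0:ℝ) ε ∧ x₂ ∈ Icc (0:ℝ) ε) ∨
         (x₁ ∈ Icc (1 - ε) (1:ℝ) ∧ x₂ ∈ Icc (1 - ε) (1:ℝ))) →
        |φ x₁ - φ x₂| ≤ C * ε ^ 2 * φ 0 := by
  set K : ℝ := Cμ * 2 ^ m with hKd
  have hC0 : 0 < Cμ := hcμ.trans_le hCμ
  have hK0 : 0 < K := by positivity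
  set A : ℝ := K * (2 * Real.exp (2 * K)) with hA
  have hA0 : 0 < A := by positivity
  set δ : ℝ := 1 / (2 * (A + 1)) with hδ
  have hδ0 : 0 < δ := by positivity
  have hδ1 : δ ≤ 1 / 2 := by
    rw [hδ, div_le_div_iff₀ (by positivity) (by norm_num)]; linarith
  have hAδ : A * δ ^ 2 ≤ 1 / 2 := by
    have : A * δ ≤ 1 / 2 := by
      rw [hδ, mul_one_div, div_le_div_iff₀ (by positivity) (by norm_num)]; linarith
    nlinarith
  set L : ℝ := Cμ / δ ^ m with hL
  have hL0 : 0 < L := by positivity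
  set G : ℝ := 2 * Real.exp (2 * L) with hG
  have hG0 : 0 < G := by positivity
  refine ⟨A * (1 + 2 * G), by positivity, 1, one_pos, ?_⟩
  intro ε hε hε2 _ Ω φ φd μ ho hc hb _ hne hsol hμ _ _ hφ0 _ hμC x₁ x₂ hx
  obtain ⟨hd, hcd, hz0, hz1, -, hode⟩ := hsol
  have g1 : GoodSol m (ωvol Ω) μ φ φd :=
    { der := hd, cont := hcd, zero := hz0, ode := hode, mupos := hμ
      pos := fun x hx => ωvol_pos ho hb (hne x hx)
      grow := by
        intro t x ht htx hx1
        have hx0 : 0 < x := ht.trans_le htx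
        refine ωvol_grow (s := 1 - (1 - x) * t / x) hc hb (hne _ ⟨?_, ?_⟩) (by linarith) (by linarith) ?_
        · rw [sub_pos, div_lt_one hx0]
          nlinarith
        · have : 0 < (1 - x) * t / x := div_pos (mul_pos (by linarith) ht) hx0
          linarith
        · field_simp
          ring }
  have g2 : GoodSol m (fun x => ωvol Ω (1 - x)) μ (fun x => φ (1 - x)) (fun x => - φd (1 - x)) :=
    { der := by
        intro x hx
        have h1 := hd (1 - x) ⟨by linarith [hx.2], by linarith [hx.1]⟩
        have h2 : HasDerivWithinAt (fun x : ℝ => 1 - x) (-1) (Icc 0 1) x :=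
          ((hasDerivAt_id x).const_sub 1).hasDerivWithinAt
        have := h1.comp x h2 (fun y hy => ⟨by linarith [hy.2], by linarith [hy.1]⟩)
        simpa [Function.comp_def] using this
      cont := by
        refine (hcd.comp (by fun_prop) ?_).neg
        exact fun y hy => ⟨by linarith [hy.2], by linarith [hy.1]⟩
      zero := by simp [hz1]
      ode := by
        intro x hx
        have h1 := hode (1 - x) ⟨by linarith [hx.2], by linarith [hx.1]⟩
        have h2 : HasDerivAt (fun x : ℝ => 1 - x) (-1) x := (hasDerivAt_id x).const_sub 1
        have := (h1.comp x h2).neg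
        exact (this.congr_deriv (by ring)).congr_of_eventuallyEq
          (Eventually.of_forall fun y => by simp)
      mupos := hμ
      pos := fun x hx => ωvol_pos ho hb (hne _ ⟨by linarith [hx.2], by linarith [hx.1]⟩)
      grow := by
        intro t x ht htx hx1
        have hx0 : 0 < x := ht.trans_le htx
        refine ωvol_grow (s := (1 - x) * t / x) hc hb (hne _ ⟨?_, ?_⟩) (by linarith) (by linarith) ?_
        · exact div_pos (mul_pos (by linarith) ht) hx0
        · rw [div_lt_one hx0]
          nlinarith
        · field_simp
          ring }
  have hKb : μ ≤ K * (1 - 1 / 2) ^ m := by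
    rw [hKd, mul_assoc, ← mul_pow]; norm_num; exact hμC
  have hLb : μ ≤ L * (1 - (1 - δ)) ^ m := by
    rw [hL, sub_sub_cancel, div_mul_cancel₀ _ (by positivity)]; exact hμC
  have hφ1 : |φ 1| ≤ 2 * G * φ 0 := by
    have h1 := g2.flat (by norm_num) hK0 hKb hδ1 (x := 0) (y := δ) ⟨le_rfl, hδ0.le⟩ ⟨hδ0.le, le_rfl⟩
    have h2 := g1.sup (by linarith) (by linarith) hL0 hLb (1 - δ) ⟨by linarith, le_rfl⟩
    rw [abs_of_pos hφ0] at h2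
    simp only [sub_zero] at h1
    have h3 : A * δ ^ 2 * |φ 1| ≤ 1 / 2 * |φ 1| := by gcongr
    have h4 := abs_sub_abs_le_abs_sub (φ 1) (φ (1 - δ))
    linarith
  rcases hx with ⟨h1, h2⟩ | ⟨h1, h2⟩
  · have := g1.flat (by norm_num) hK0 hKb hε2.le h1 h2
    rw [abs_of_pos hφ0] at this
    refine this.trans ?_
    have : 0 ≤ A * (2 * G) * ε ^ 2 * φ 0 := by positivity
    linarith
  · have := g2.flat (by norm_num) hK0 hKb hε2.le (x := 1 - x₁) (y := 1 - x₂)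
      ⟨by linarith [h1.2], by linarith [h1.1]⟩ ⟨by linarith [h2.2], by linarith [h2.1]⟩
    simp only [sub_sub_cancel, sub_zero] at this
    refine this.trans ?_
    have h3 : A * ε ^ 2 * |φ 1| ≤ A * ε ^ 2 * (2 * G * φ 0) := by gcongr
    have : 0 ≤ A * ε ^ 2 * φ 0 := by positivity
    linarith
end
end

section
/- Suppose ω : [0,1] → ℝ is continuous, ω(x) > 0 for all x ∈ (0,1), and either (a) ω(0) > 0, or (b) ω(0) = 0 and ω is monotone increasing on some interval [0, δ] with δ > 0. Then for every μ > 0 there exists a unique φ ∈ C¹([0,1)) with φ(0) = 1 and φ'(0) = 0 satisfying, for all x ∈ (0,1), φ(x) = 1 + ∫_0^x φ'(s) ds and φ'(x) = −(1/ω(x)) ∫_0^x μ ω(s) φ(s) ds (equivalently, ω φ' is differentiable on (0,1) with (ω(x) φ'(x))' = −μ ω(x) φ(x)). Moreover, for each fixed x, the value φ(x) depends continuously on μ. -/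
open MeasureTheory Set Filter Topology

noncomputable section

/-- `(φ, φd)` is a C¹ solution on `[0,1)` of the (possibly singular) initial value problem
`φ(0) = 1`, `φ'(0) = 0`, `φ(x) = 1 + ∫₀ˣ φ'` and `φ'(x) = -(1/ω(x)) ∫₀ˣ μ ω φ` on `(0,1)`. -/
def PicardSol (ω : ℝ → ℝ) (μ : ℝ) (φ φd : ℝ → ℝ) : Prop :=
  (∀ x ∈ Ico (0:ℝ) 1, HasDerivWithinAt φ (φd x) (Ico 0 1) x) ∧
  ContinuousOn φd (Ico 0 1) ∧
  φ 0 = 1 ∧ φd 0 = 0 ∧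
  ∀ x ∈ Ioo (0:ℝ) 1,
    φ x = 1 + (∫ s in (0:ℝ)..x, φd s) ∧
    φd x = -(1 / ω x) * ∫ s in (0:ℝ)..x, μ * ω s * φ s

def GG (ω f : ℝ → ℝ) (t : ℝ) : ℝ := (1 / ω t) * ∫ s in (0:ℝ)..t, ω s * f s
def KK (ω f : ℝ → ℝ) (x : ℝ) : ℝ := ∫ t in (0:ℝ)..x, GG ω f t

def aa (ω : ℝ → ℝ) : ℕ → ℝ → ℝ
  | 0 => fun _ => 1
  | (n+1) => KK ω (aa ω n)

def CB (ω : ℝ → ℝ) (b C : ℝ) : Prop := 0 ≤ C ∧ ∀ t ∈ Ioc (0:ℝ) b, 0 < ω t ∧ ∀ s ∈ Icc (0:ℝ) t, |ω s| ≤ C * ω t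

lemma exists_CB (ω : ℝ → ℝ)
    (hωc : ContinuousOn ω (Icc 0 1))
    (hωpos : ∀ x ∈ Ioo (0:ℝ) 1, 0 < ω x)
    (hω0 : 0 < ω 0 ∨ (ω 0 = 0 ∧ ∃ δ > 0, MonotoneOn ω (Icc 0 δ)))
    (b : ℝ) (hb0 : 0 < b) (hb : b < 1) : ∃ C, CB ω b C := by
  have hsub : Icc 0 b ⊆ Icc (0:ℝ) 1 := Icc_subset_Icc le_rfl hb.le
  obtain ⟨M, hM⟩ := isCompact_Icc.exists_bound_of_continuousOn (hωc.mono hsub)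
  have hM0 : 0 ≤ M := (norm_nonneg _).trans (hM 0 ⟨le_rfl, hb0.le⟩)
  -- it is enough to bound below away from a monotone part
  have key : ∃ e, 0 ≤ e ∧ e ≤ b ∧ (∀ t ∈ Icc e b, 0 < ω t) ∧
      (∀ t ∈ Ioc (0:ℝ) b, t < e → ∀ s ∈ Icc (0:ℝ) t, |ω s| ≤ ω t) := by
    rcases hω0 with h | ⟨h0, δ, hδ, hmono⟩
    · refine ⟨0, le_rfl, hb0.le, ?_, ?_⟩
      · intro t ht
        rcases ht.1.eq_or_lt with h1 | h1
        · rw [← h1]; exact h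
        · exact hωpos t ⟨h1, ht.2.trans_lt hb⟩
      · intro t ht h1; exact absurd ht.1 (not_lt.2 h1.le)
    · refine ⟨min δ b, (lt_min hδ hb0).le, min_le_right _ _, ?_, ?_⟩
      · intro t ht
        exact hωpos t ⟨(lt_min hδ hb0).trans_le ht.1, ht.2.trans_lt hb⟩
      · intro t ht h1 s hs
        have htd : t ≤ δ := h1.le.trans (min_le_left _ _)
        have h2 : ω s ≤ ω t := hmono ⟨hs.1, hs.2.trans htd⟩ ⟨ht.1.le, htd⟩ hs.2
        have h3 : ω 0 ≤ ω s := hmono ⟨le_rfl, hδ.le⟩ ⟨hs.1, hs.2.trans htd⟩ hs.1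
        rw [abs_of_nonneg (by linarith)]; exact h2
  obtain ⟨e, he0, heb, hpos, hsm⟩ := key
  obtain ⟨z, hz, hzmin⟩ := isCompact_Icc.exists_isMinOn (nonempty_Icc.2 heb)
    (hωc.mono ((Icc_subset_Icc_left he0).trans hsub))
  have hm := hpos z hz
  refine ⟨max 1 (M / ω z), le_max_of_le_left zero_le_one, ?_⟩
  intro t ht
  have hp := hωpos t ⟨ht.1, ht.2.trans_lt hb⟩
  refine ⟨hp, fun s hs => ?_⟩
  rcases lt_or_ge t e with h | h
  · calc |ω s| ≤ 1 * ω t := by rw [one_mul]; exact hsm t ht h s hs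
      _ ≤ _ := by gcongr; exact le_max_left _ _
  · have h1 : ω z ≤ ω t := hzmin ⟨h, ht.2⟩
    calc |ω s| ≤ M := hM s ⟨hs.1, hs.2.trans ht.2⟩
      _ = M / ω z * ω z := by field_simp
      _ ≤ M / ω z * ω t := by gcongr
      _ ≤ _ := by gcongr; exact le_max_right _ _

lemma GG_bound {ω f : ℝ → ℝ} {b C A : ℝ} {n : ℕ} (hC : CB ω b C) (hA : 0 ≤ A)
    (hf : ∀ s ∈ Icc (0:ℝ) b, |f s| ≤ A * s ^ n) : ∀ t ∈ Icc (0:ℝ) b, |GG ω f t| ≤ C * (A * t ^ n) * t := by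
  intro t ht
  rcases ht.1.eq_or_lt with h | h
  · subst h; simp [GG]
  obtain ⟨hp, hs⟩ := hC.2 t ⟨h, ht.2⟩
  have h1 : ‖∫ s in (0:ℝ)..t, ω s * f s‖ ≤ (C * ω t * (A * t ^ n)) * |t - 0| := by
    apply intervalIntegral.norm_integral_le_of_norm_le_const
    intro s hs'
    rw [uIoc_of_le ht.1] at hs'
    have h0 := hs'.1.le
    rw [norm_mul, Real.norm_eq_abs, Real.norm_eq_abs]
    have hC0 := hC.1
    apply mul_le_mul (hs s ⟨hs'.1.le, hs'.2⟩) _ (abs_nonneg _) (by positivity)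
    refine (hf s ⟨hs'.1.le, hs'.2.trans ht.2⟩).trans ?_
    have := hs'.2
    gcongr
  rw [sub_zero, abs_of_nonneg ht.1, Real.norm_eq_abs] at h1
  rw [GG, abs_mul, abs_of_pos (by positivity : 0 < 1 / ω t)]
  calc _ ≤ 1 / ω t * (C * ω t * (A * t ^ n) * t) := by gcongr
    _ = _ := by field_simp

lemma KK_bound {ω f : ℝ → ℝ} {b C A : ℝ} {n : ℕ} (hb : b < 1) (hC : CB ω b C) (hA : 0 ≤ A)
    (hf : ∀ s ∈ Icc (0:ℝ) b, |f s| ≤ A * s ^ n) :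
    ∀ x ∈ Icc (0:ℝ) b, |KK ω f x| ≤ C * A / (n + 1) * x ^ (n + 1) := by
  intro x hx
  have h1 : ‖∫ t in (0:ℝ)..x, GG ω f t‖ ≤ ∫ t in (0:ℝ)..x, C * A * t ^ n := by
    apply intervalIntegral.norm_integral_le_of_norm_le hx.1
    · refine Eventually.of_forall fun t ht => ?_
      have ht0 := ht.1.le
      have hC0 := hC.1
      have ht1 : t ≤ b := ht.2.trans hx.2
      refine (GG_bound hC hA hf t ⟨ht0, ht1⟩).trans ?_
      have h2 : 0 ≤ C * (A * t ^ n) := by positivity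
      nlinarith
    · apply Continuous.intervalIntegrable; fun_prop
  rw [intervalIntegral.integral_const_mul, integral_pow] at h1
  rw [KK, ← Real.norm_eq_abs]
  refine h1.trans (le_of_eq ?_)
  rw [zero_pow (by omega)]; ring

lemma contOn_Ico {f : ℝ → ℝ} (h : ∀ b, 0 < b → b < 1 → ContinuousOn f (Icc 0 b)) :
    ContinuousOn f (Ico 0 1) := by
  intro x hx
  have h1 := h ((x+1)/2) (by linarith [hx.1]) (by linarith [hx.2]) x ⟨hx.1, by linarith [hx.2]⟩
  refine h1.mono_of_mem_nhdsWithin ?_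
  have : Iio ((x+1)/2) ∈ 𝓝 x := Iio_mem_nhds (by linarith [hx.2])
  filter_upwards [mem_nhdsWithin_of_mem_nhds this, self_mem_nhdsWithin] with y hy hy2
  exact ⟨hy2.1, le_of_lt hy⟩

lemma deriv_prim {f : ℝ → ℝ} (h : ContinuousOn f (Ico 0 1)) (x : ℝ) (hx : x ∈ Ico (0:ℝ) 1) :
    HasDerivWithinAt (fun x => ∫ t in (0:ℝ)..x, f t) (f x) (Ico 0 1) x := by
  set b := (x+1)/2 with hb
  have hb0 : 0 ≤ b := by linarith [hx.1]
  have hxb : x < b := by linarith [hx.2]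
  have hb1 : b < 1 := by linarith [hx.2]
  have hc : Continuous (IccExtend hb0 ((Icc 0 b).domRestrict f)) := by
    apply Continuous.Icc_extend'
    exact (h.mono (fun y hy => ⟨hy.1, hy.2.trans_lt hb1⟩)).domRestrict
  have hval : ∀ y ∈ Icc 0 b, IccExtend hb0 ((Icc 0 b).domRestrict f) y = f y := fun y hy => by
    rw [IccExtend_of_mem _ _ hy]; rfl
  have h1 := (hc.integral_hasStrictDerivAt 0 x).hasDerivAt.hasDerivWithinAt (s := Ico 0 1)
  rw [hval x ⟨hx.1, hxb.le⟩] at h1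
  have heq : ∀ y ∈ Icc 0 b, ∫ t in (0:ℝ)..y, f t = ∫ t in (0:ℝ)..y, IccExtend hb0 ((Icc 0 b).domRestrict f) t := by
    intro y hy
    apply intervalIntegral.integral_congr
    intro t ht
    rw [uIcc_of_le hy.1] at ht
    exact (hval t ⟨ht.1, ht.2.trans hy.2⟩).symm
  refine h1.congr_of_eventuallyEq ?_ (heq x ⟨hx.1, hxb.le⟩)
  filter_upwards [mem_nhdsWithin_of_mem_nhds (Iio_mem_nhds hxb), self_mem_nhdsWithin] with y hy hy2
  exact heq y ⟨hy2.1, le_of_lt hy⟩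

lemma intable {f : ℝ → ℝ} (h : ContinuousOn f (Ico 0 1)) (x : ℝ) (hx : x ∈ Ico (0:ℝ) 1) :
    IntervalIntegrable f volume 0 x := by
  apply ContinuousOn.intervalIntegrable
  rw [uIcc_of_le hx.1]
  exact h.mono (fun y hy => ⟨hy.1, hy.2.trans_lt hx.2⟩)

/-- standing hypotheses -/
def HH (ω : ℝ → ℝ) : Prop := ContinuousOn ω (Ico 0 1) ∧ ∀ b, 0 < b → b < 1 → ∃ C, CB ω b C

lemma GG_cont {ω f : ℝ → ℝ} (hω : HH ω) (hf : ContinuousOn f (Ico 0 1)) :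
    ContinuousOn (GG ω f) (Ico 0 1) := by
  intro x hx
  have hprim : ContinuousWithinAt (fun t => ∫ s in (0:ℝ)..t, ω s * f s) (Ico 0 1) x :=
    (deriv_prim (hω.1.mul hf) x hx).continuousWithinAt
  rcases hx.1.eq_or_lt with h | h
  · subst h
    obtain ⟨C, hC⟩ := hω.2 (1/2) (by norm_num) (by norm_num)
    obtain ⟨M, hM⟩ := isCompact_Icc.exists_bound_of_continuousOn
      (hf.mono (fun y hy => ⟨hy.1, hy.2.trans_lt (by norm_num)⟩ : Icc (0:ℝ) (1/2) ⊆ Ico 0 1))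
    have hM0 : 0 ≤ M := (norm_nonneg _).trans (hM 0 ⟨le_rfl, by norm_num⟩)
    have hG := GG_bound (n := 0) (f := f) hC hM0 (by simpa using hM)
    have h0 : GG ω f 0 = 0 := by simp [GG]
    rw [ContinuousWithinAt, h0]
    apply squeeze_zero_norm' (a := fun t => C * (M * t ^ 0) * t)
    · filter_upwards [mem_nhdsWithin_of_mem_nhds (Iio_mem_nhds (by norm_num : (0:ℝ) < 1/2)), self_mem_nhdsWithin] with y hy hy2
      exact hG y ⟨hy2.1, le_of_lt hy⟩
    · have : Continuous (fun t : ℝ => C * (M * t ^ 0) * t) := by fun_prop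
      have h2 := this.tendsto 0
      simp only [mul_zero] at h2
      exact h2.mono_left nhdsWithin_le_nhds
  · obtain ⟨C, hC⟩ := hω.2 x h hx.2
    have hp := (hC.2 x ⟨h, le_rfl⟩).1
    exact (continuousWithinAt_const.div (hω.1 x hx) hp.ne').mul hprim

lemma KK_cont {ω f : ℝ → ℝ} (hω : HH ω) (hf : ContinuousOn f (Ico 0 1)) :
    ContinuousOn (KK ω f) (Ico 0 1) := fun x hx =>
  (deriv_prim (GG_cont hω hf) x hx).continuousWithinAt

lemma GG_lin {ω f g : ℝ → ℝ} (c : ℝ) (hω : HH ω) (hf : ContinuousOn f (Ico 0 1))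
    (hg : ContinuousOn g (Ico 0 1)) (x : ℝ) (hx : x ∈ Ico (0:ℝ) 1) :
    GG ω (fun s => f s + c * g s) x = GG ω f x + c * GG ω g x := by
  unfold GG
  have : ∀ s, ω s * (f s + c * g s) = ω s * f s + c * (ω s * g s) := fun s => by ring
  simp only [this]
  have i1 : IntervalIntegrable (fun s => ω s * f s) volume 0 x := intable (hω.1.mul hf) x hx
  have i2 : IntervalIntegrable (fun s => ω s * g s) volume 0 x := intable (hω.1.mul hg) x hx
  rw [intervalIntegral.integral_add i1 (i2.const_mul c), intervalIntegral.integral_const_mul]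
  ring

lemma KK_lin {ω f g : ℝ → ℝ} (c : ℝ) (hω : HH ω) (hf : ContinuousOn f (Ico 0 1))
    (hg : ContinuousOn g (Ico 0 1)) (x : ℝ) (hx : x ∈ Ico (0:ℝ) 1) :
    KK ω (fun s => f s + c * g s) x = KK ω f x + c * KK ω g x := by
  unfold KK
  rw [intervalIntegral.integral_congr (g := fun t => GG ω f t + c * GG ω g t),
    intervalIntegral.integral_add (intable (GG_cont hω hf) x hx)
    ((intable (GG_cont hω hg) x hx).const_mul c), intervalIntegral.integral_const_mul]
  intro t ht
  rw [uIcc_of_le hx.1] at ht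
  exact GG_lin c hω hf hg t ⟨ht.1, ht.2.trans_lt hx.2⟩

lemma aa_cont {ω : ℝ → ℝ} (hω : HH ω) (n : ℕ) : ContinuousOn (aa ω n) (Ico 0 1) := by
  induction n with
  | zero => exact continuousOn_const
  | succ n ih => exact KK_cont hω ih

lemma aa_bound {ω : ℝ → ℝ} {b C : ℝ} (hb : b < 1) (hC : CB ω b C) (n : ℕ) :
    ∀ x ∈ Icc (0:ℝ) b, |aa ω n x| ≤ C ^ n / n.factorial * x ^ n := by
  have hC0 := hC.1
  induction n with
  | zero => intro x _; simp [aa]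
  | succ n ih =>
    intro x hx
    refine (KK_bound hb hC (by positivity) ih x hx).trans (le_of_eq ?_)
    rw [Nat.factorial_succ]; push_cast; field_simp; ring

lemma term_bound {ω : ℝ → ℝ} {b C : ℝ} (hb : b < 1) (hC : CB ω b C) (n : ℕ) (μ M : ℝ) (hM : |μ| ≤ M) :
    ∀ x ∈ Icc (0:ℝ) b, ‖(-μ) ^ n * aa ω n x‖ ≤ (M * C) ^ n / n.factorial := by
  intro x hx
  have hC0 := hC.1
  have hM0 := (abs_nonneg μ).trans hM
  have hx0 := hx.1
  rw [norm_mul, norm_pow, norm_neg, Real.norm_eq_abs, Real.norm_eq_abs, mul_pow, mul_div_assoc]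
  have h1 := aa_bound hb hC n x hx
  have h2 : x ^ n ≤ 1 := pow_le_one₀ hx.1 (by linarith [hx.2])
  have h3 : |aa ω n x| ≤ C ^ n / n.factorial := h1.trans (mul_le_of_le_one_right (by positivity) h2)
  gcongr

def PP (ω : ℝ → ℝ) (μ x : ℝ) : ℝ := ∑' n : ℕ, (-μ) ^ n * aa ω n x

def SS (ω : ℝ → ℝ) (μ : ℝ) (N : ℕ) (x : ℝ) : ℝ := ∑ n ∈ Finset.range N, (-μ) ^ n * aa ω n x

lemma PP_cont {ω : ℝ → ℝ} (hω : HH ω) (μ : ℝ) : ContinuousOn (PP ω μ) (Ico 0 1) := by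
  apply contOn_Ico
  intro b hb0 hb
  obtain ⟨C, hC⟩ := hω.2 b hb0 hb
  refine continuousOn_tsum (fun n => ?_) (Real.summable_pow_div_factorial (|μ| * C))
    (fun n x hx => term_bound hb hC n μ _ le_rfl x hx)
  exact continuousOn_const.mul ((aa_cont hω n).mono (fun y hy => ⟨hy.1, hy.2.trans_lt hb⟩))

lemma PP_cont_mu {ω : ℝ → ℝ} (hω : HH ω) (x : ℝ) (hx : x ∈ Ico (0:ℝ) 1) :
    Continuous (fun μ => PP ω μ x) := by
  rw [continuous_iff_continuousAt]
  intro μ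
  obtain ⟨C, hC⟩ := hω.2 ((x+1)/2) (by linarith [hx.1]) (by linarith [hx.2])
  have : ContinuousOn (fun μ => PP ω μ x) (Ioo (μ - 1) (μ + 1)) := by
    refine continuousOn_tsum (fun n => ?_) (Real.summable_pow_div_factorial ((|μ| + 1) * C))
      (fun n ν hν => term_bound (by linarith [hx.2]) hC n ν _ ?_ x ⟨hx.1, by linarith [hx.2]⟩)
    · fun_prop
    · rw [abs_le]; constructor <;> linarith [hν.1, hν.2, le_abs_self μ, neg_abs_le μ]
  exact this.continuousAt (Ioo_mem_nhds (by linarith) (by linarith))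

lemma SS_cont {ω : ℝ → ℝ} (hω : HH ω) (μ : ℝ) (N : ℕ) : ContinuousOn (SS ω μ N) (Ico 0 1) := by
  unfold SS
  exact continuousOn_finsetSum _ fun n _ => continuousOn_const.mul (aa_cont hω n)

lemma SS_succ {ω : ℝ → ℝ} (hω : HH ω) (μ : ℝ) (N : ℕ) (x : ℝ) (hx : x ∈ Ico (0:ℝ) 1) :
    SS ω μ (N+1) x = 1 - μ * KK ω (SS ω μ N) x := by
  induction N with
  | zero => simp [SS, aa, KK, GG]
  | succ N ih =>
    have h1 : SS ω μ (N+1) = fun s => SS ω μ N s + (-μ)^N * aa ω N s := by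
      ext s; simp [SS, Finset.sum_range_succ]
    have h2 : SS ω μ (N+1+1) x = SS ω μ (N+1) x + (-μ)^(N+1) * aa ω (N+1) x := by
      rw [SS, Finset.sum_range_succ]; rfl
    rw [h2, ih, h1, KK_lin _ hω (SS_cont hω μ N) (aa_cont hω N) x hx, aa]
    ring

lemma PP_eq {ω : ℝ → ℝ} (hω : HH ω) (μ : ℝ) (x : ℝ) (hx : x ∈ Ico (0:ℝ) 1) :
    PP ω μ x = 1 - μ * KK ω (PP ω μ) x := by
  set b := (x+1)/2 with hbd
  have hxb : x ∈ Icc 0 b := ⟨hx.1, by linarith [hx.2]⟩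
  have hb : b < 1 := by linarith [hx.2]
  obtain ⟨C, hC⟩ := hω.2 b (by linarith [hx.1]) hb
  have hC0 := hC.1
  have hu : TendstoUniformlyOn (fun N x => SS ω μ N x) (PP ω μ) atTop (Icc 0 b) :=
    tendstoUniformlyOn_tsum_nat (Real.summable_pow_div_factorial (|μ| * C))
    (fun n x hx => term_bound hb hC n μ _ le_rfl x hx)
  have hl : Tendsto (fun N => SS ω μ (N+1) x) atTop (𝓝 (PP ω μ x)) :=
    (tendsto_add_atTop_iff_nat 1).2 (hu.tendsto_at hxb)
  have hk : Tendsto (fun N => KK ω (SS ω μ N) x) atTop (𝓝 (KK ω (PP ω μ) x)) := by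
    rw [Metric.tendsto_atTop]
    intro ε hε
    rw [Metric.tendstoUniformlyOn_iff] at hu
    have hε' : 0 < ε / (C + 1) := by positivity
    obtain ⟨N0, hN0⟩ := eventually_atTop.1 (hu _ hε')
    refine ⟨N0, fun N hN => ?_⟩
    have h1 := KK_lin (-1) hω (SS_cont hω μ N) (PP_cont hω μ) x hx
    have h2 := KK_bound (n := 0) (f := fun s => SS ω μ N s + -1 * PP ω μ s) hb hC hε'.le (by
      intro s hs
      have := hN0 N hN s hs
      rw [dist_comm, Real.dist_eq] at this
      rw [pow_zero, mul_one, neg_one_mul, ← sub_eq_add_neg]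
      exact this.le) x hxb
    rw [h1, neg_one_mul, ← sub_eq_add_neg] at h2
    rw [Real.dist_eq]
    refine h2.trans_lt ?_
    have hx1 : x ^ (0+1) ≤ 1 := by simpa using hx.2.le
    have h3 : C * (ε / (C+1)) < ε := by
      rw [← mul_div_assoc, div_lt_iff₀ (by positivity)]; nlinarith
    have h4 : 0 ≤ C * (ε / (C+1)) := by positivity
    norm_num at hx1 ⊢
    nlinarith [hx.1]
  have hr : Tendsto (fun N => SS ω μ (N+1) x) atTop (𝓝 (1 - μ * KK ω (PP ω μ) x)) := by
    simp only [SS_succ hω μ _ x hx]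
    exact (hk.const_mul μ).const_sub 1
  exact tendsto_nhds_unique hl hr

lemma KK_unique {ω d : ℝ → ℝ} (hω : HH ω) (μ : ℝ) (hd : ContinuousOn d (Ico 0 1))
    (h : ∀ x ∈ Ico (0:ℝ) 1, d x = -μ * KK ω d x) (x : ℝ) (hx : x ∈ Ico (0:ℝ) 1) : d x = 0 := by
  set b := (x+1)/2 with hbd
  have hxb : x ∈ Icc 0 b := ⟨hx.1, by linarith [hx.2]⟩
  have hb : b < 1 := by linarith [hx.2]
  obtain ⟨C, hC⟩ := hω.2 b (by linarith [hx.1]) hb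
  have hC0 := hC.1
  have hsub : Icc 0 b ⊆ Ico (0:ℝ) 1 := fun y hy => ⟨hy.1, hy.2.trans_lt hb⟩
  obtain ⟨M, hM⟩ := isCompact_Icc.exists_bound_of_continuousOn (hd.mono hsub)
  have hM0 : 0 ≤ M := (norm_nonneg _).trans (hM x hxb)
  have key : ∀ n : ℕ, ∀ y ∈ Icc 0 b, |d y| ≤ M * ((|μ| * C) ^ n / n.factorial) * y ^ n := by
    intro n
    induction n with
    | zero => simpa using hM
    | succ n ih =>
      intro y hy
      have h1 := KK_bound hb hC (by positivity) ih y hy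
      rw [h y (hsub hy), abs_mul, abs_neg]
      calc _ ≤ |μ| * _ := mul_le_mul_of_nonneg_left h1 (abs_nonneg _)
        _ = _ := by rw [Nat.factorial_succ]; push_cast; field_simp; ring
  have hlim : Tendsto (fun n : ℕ => M * ((|μ| * C * x) ^ n / n.factorial)) atTop (𝓝 (M * 0)) :=
    (FloorSemiring.tendsto_pow_div_factorial_atTop _).const_mul M
  rw [mul_zero] at hlim
  have : |d x| ≤ 0 := ge_of_tendsto' hlim fun n => (key n x hxb).trans (le_of_eq (by
    rw [mul_pow (|μ| * C) x]; ring))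
  exact abs_nonpos_iff.1 this

/-- Existence, uniqueness, and continuous dependence on `μ` for the
possibly-singular initial value problem `-(ωφ')' = μωφ`, `φ(0) = 1`, `φ'(0) = 0`. -/
theorem singular_ode_well_posed
    (ω : ℝ → ℝ)
    (hωc : ContinuousOn ω (Icc 0 1))
    (hωpos : ∀ x ∈ Ioo (0:ℝ) 1, 0 < ω x)
    (hω0 : 0 < ω 0 ∨ (ω 0 = 0 ∧ ∃ δ > 0, MonotoneOn ω (Icc 0 δ))) :
    ∃ Φ Φd : ℝ → ℝ → ℝ,
      (∀ μ : ℝ, 0 < μ →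
        PicardSol ω μ (Φ μ) (Φd μ) ∧
        ∀ ψ ψd : ℝ → ℝ, PicardSol ω μ ψ ψd → ∀ x ∈ Ico (0:ℝ) 1, ψ x = Φ μ x) ∧
      (∀ x ∈ Ico (0:ℝ) 1, ContinuousOn (fun μ => Φ μ x) (Ioi 0)) := by
  have hω : HH ω := ⟨hωc.mono Ico_subset_Icc_self, fun b h0 h1 => exists_CB ω hωc hωpos hω0 b h0 h1⟩
  have hint : ∀ (μ : ℝ) (f : ℝ → ℝ) (x : ℝ),
      -(1 / ω x) * ∫ s in (0:ℝ)..x, μ * ω s * f s = -μ * GG ω f x := by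
    intro μ f x
    simp only [GG, mul_assoc, intervalIntegral.integral_const_mul]
    ring
  refine ⟨PP ω, fun μ x => -μ * GG ω (PP ω μ) x, fun μ hμ => ⟨?_, ?_⟩,
    fun x hx => (PP_cont_mu hω x hx).continuousOn⟩
  · have hP := PP_cont hω μ
    have hE := PP_eq hω μ
    refine ⟨fun x hx => ?_, continuousOn_const.mul (GG_cont hω hP), ?_, ?_, fun x hx => ⟨?_, ?_⟩⟩
    · have h1 := ((deriv_prim (GG_cont hω hP) x hx).const_mul μ).const_sub 1
      change HasDerivWithinAt _ (-μ * GG ω (PP ω μ) x) _ _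
      rw [neg_mul]
      exact h1.congr (fun y hy => hE y hy) (hE x hx)
    · rw [hE 0 ⟨le_rfl, one_pos⟩]; simp [KK]
    · simp [GG]
    · rw [intervalIntegral.integral_const_mul, hE x ⟨hx.1.le, hx.2⟩, KK]; ring
    · rw [hint]
  · rintro ψ ψd ⟨h1, h2, h3, h4, h5⟩ x hx
    have hψc : ContinuousOn ψ (Ico 0 1) := fun y hy => (h1 y hy).continuousWithinAt
    have hψ : ∀ y ∈ Ico (0:ℝ) 1, ψ y = 1 - μ * KK ω ψ y := by
      intro y hy
      rcases hy.1.eq_or_lt with h | h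
      · subst h; simp [KK, h3]
      · rw [(h5 y ⟨h, hy.2⟩).1, intervalIntegral.integral_congr (g := fun t => -μ * GG ω ψ t),
          intervalIntegral.integral_const_mul, KK]
        · ring
        · intro t ht
          rw [uIcc_of_le hy.1] at ht
          rcases ht.1.eq_or_lt with h' | h'
          · subst h'; simp [GG, h4]
          · change ψd t = _
            rw [(h5 t ⟨h', ht.2.trans_lt hy.2⟩).2, hint]
    have hP := PP_cont hω μ
    have := KK_unique (d := fun s => ψ s + -1 * PP ω μ s) hω μ
      (hψc.add (continuousOn_const.mul hP)) (fun y hy => by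
        rw [KK_lin _ hω hψc hP y hy]
        simp only [hψ y hy, PP_eq hω μ y hy]
        ring_nf) x hx
    linarith
end
end
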